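/- Let Γ ⊢ Δ be a sequent of L' containing only F-propositions. If Γ ⊢ Δ has a proof in sequent calculus modulo the congruence generated by σ, then it has a proof in which all propositions occurring are F-propositions and all quantifier witnesses are F-terms of sort 0. -/

import Mathlib

/- ## Binding logic: syntax and sequent calculus -/

/-- A binding-logic language: function and predicate symbols with binding arities. -/
structure BSig where
  Fn : Type
  Pr : Type
  /-- binding arity of a function symbol -/
  far : Fn → List ℕ
  /-- binding arity of a predicate symbol -/
  par : Pr → List ℕ

/-- Terms of binding logic (α-equivalence classes, in locally nameless / de Bruijn style):
`bvar i` is a variable bound by a binder of a function symbol or by a quantifier,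
`fvar x` is a named free variable.  In `app f a`, the `i`-th argument `a i` is a term
in which `(S.far f).get i` additional variables (de Bruijn indices `0, …, kᵢ - 1`) are bound. -/
inductive Tm (S : BSig) : Type
  | bvar : ℕ → Tm S
  | fvar : ℕ → Tm S
  | app : (f : S.Fn) → (Fin (S.far f).length → Tm S) → Tm S

variable {S : BSig}

/-- `Tm.WF p t`: all de Bruijn variables of `t` are bound among the `p` ambient binders;
a *term of the language* (over named free variables) at binder depth `p`. -/
def Tm.WF : ℕ → Tm S → Prop
  | p, .bvar i => i < p
  | _, .fvar _ => True
  | p, .app f a => ∀ i, Tm.WF (p + (S.far f).get i) (a i)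

/-- Capture-avoiding substitution of the term `u` for the free variable `x`. -/
def Tm.subst (x : ℕ) (u : Tm S) : Tm S → Tm S
  | .bvar i => .bvar i
  | .fvar y => if y = x then u else .fvar y
  | .app f a => .app f (fun i => Tm.subst x u (a i))

/-- Instantiation of the bound variable `k` by the (locally closed) term `u`. -/
def Tm.openT (u : Tm S) : ℕ → Tm S → Tm S
  | k, .bvar i => if i = k then u else .bvar i
  | _, .fvar y => .fvar y
  | k, .app f a => .app f (fun i => Tm.openT u (k + (S.far f).get i) (a i))

/-- Free (named) variables of a term. -/
def Tm.fv : Tm S → Set ℕ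
  | .bvar _ => ∅
  | .fvar x => {x}
  | .app _ a => ⋃ i, (a i).fv

/-- Propositions of binding logic.  In `atom P a`, the `i`-th argument binds
`(S.par P).get i` variables; quantifiers bind one de Bruijn variable. -/
inductive Fm (S : BSig) : Type
  | atom : (P : S.Pr) → (Fin (S.par P).length → Tm S) → Fm S
  | imp : Fm S → Fm S → Fm S
  | conj : Fm S → Fm S → Fm S
  | disj : Fm S → Fm S → Fm S
  | bot : Fm S
  | all : Fm S → Fm S
  | ex : Fm S → Fm S

/-- `Fm.WF q A`: well-formedness of `A` under `q` ambient quantifiers. -/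
def Fm.WF : ℕ → Fm S → Prop
  | q, .atom P a => ∀ i, Tm.WF (q + (S.par P).get i) (a i)
  | q, .imp A B => Fm.WF q A ∧ Fm.WF q B
  | q, .conj A B => Fm.WF q A ∧ Fm.WF q B
  | q, .disj A B => Fm.WF q A ∧ Fm.WF q B
  | _, .bot => True
  | q, .all A => Fm.WF (q + 1) A
  | q, .ex A => Fm.WF (q + 1) A

/-- Free (named) variables of a proposition. -/
def Fm.fv : Fm S → Set ℕ
  | .atom _ a => ⋃ i, (a i).fv
  | .imp A B => A.fv ∪ B.fv
  | .conj A B => A.fv ∪ B.fv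
  | .disj A B => A.fv ∪ B.fv
  | .bot => ∅
  | .all A => A.fv
  | .ex A => A.fv

/-- Instantiation of the quantifier-bound variable `k` of a proposition by a term. -/
def Fm.openF (u : Tm S) : ℕ → Fm S → Fm S
  | k, .atom P a => .atom P (fun i => Tm.openT u (k + (S.par P).get i) (a i))
  | k, .imp A B => .imp (Fm.openF u k A) (Fm.openF u k B)
  | k, .conj A B => .conj (Fm.openF u k A) (Fm.openF u k B)
  | k, .disj A B => .disj (Fm.openF u k A) (Fm.openF u k B)
  | _, .bot => .bot
  | k, .all A => .all (Fm.openF u (k + 1) A)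
  | k, .ex A => .ex (Fm.openF u (k + 1) A)

/-- Capture-avoiding substitution of a term for a free variable in a proposition. -/
def Fm.subst (x : ℕ) (u : Tm S) : Fm S → Fm S
  | .atom P a => .atom P (fun i => Tm.subst x u (a i))
  | .imp A B => .imp (Fm.subst x u A) (Fm.subst x u B)
  | .conj A B => .conj (Fm.subst x u A) (Fm.subst x u B)
  | .disj A B => .disj (Fm.subst x u A) (Fm.subst x u B)
  | .bot => .bot
  | .all A => .all (Fm.subst x u A)
  | .ex A => .ex (Fm.subst x u A)

/-- Free variables of a multiset of propositions. -/
def mFv (Γ : Multiset (Fm S)) : Set ℕ := {x | ∃ A ∈ Γ, x ∈ A.fv}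

/-- The sequent calculus of binding logic: exactly the standard rules of classical
sequent calculus, with capture-avoiding substitution in the quantifier rules. -/
inductive Deriv (S : BSig) : Multiset (Fm S) → Multiset (Fm S) → Prop
  | ax (A : Fm S) : Deriv S {A} {A}
  | cut {Γ Δ : Multiset (Fm S)} {A : Fm S} :
      Deriv S (A ::ₘ Γ) Δ → Deriv S Γ (A ::ₘ Δ) → Deriv S Γ Δ
  | contrL {Γ Δ} {A : Fm S} : Deriv S (A ::ₘ A ::ₘ Γ) Δ → Deriv S (A ::ₘ Γ) Δ
  | contrR {Γ Δ} {A : Fm S} : Deriv S Γ (A ::ₘ A ::ₘ Δ) → Deriv S Γ (A ::ₘ Δ)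
  | weakL {Γ Δ} {A : Fm S} : Deriv S Γ Δ → Deriv S (A ::ₘ Γ) Δ
  | weakR {Γ Δ} {A : Fm S} : Deriv S Γ Δ → Deriv S Γ (A ::ₘ Δ)
  | impL {Γ Δ} {A B : Fm S} :
      Deriv S Γ (A ::ₘ Δ) → Deriv S (B ::ₘ Γ) Δ → Deriv S ((Fm.imp A B) ::ₘ Γ) Δ
  | impR {Γ Δ} {A B : Fm S} :
      Deriv S (A ::ₘ Γ) (B ::ₘ Δ) → Deriv S Γ ((Fm.imp A B) ::ₘ Δ)
  | conjL {Γ Δ} {A B : Fm S} :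
      Deriv S (A ::ₘ B ::ₘ Γ) Δ → Deriv S ((Fm.conj A B) ::ₘ Γ) Δ
  | conjR {Γ Δ} {A B : Fm S} :
      Deriv S Γ (A ::ₘ Δ) → Deriv S Γ (B ::ₘ Δ) → Deriv S Γ ((Fm.conj A B) ::ₘ Δ)
  | disjL {Γ Δ} {A B : Fm S} :
      Deriv S (A ::ₘ Γ) Δ → Deriv S (B ::ₘ Γ) Δ → Deriv S ((Fm.disj A B) ::ₘ Γ) Δ
  | disjR {Γ Δ} {A B : Fm S} :
      Deriv S Γ (A ::ₘ B ::ₘ Δ) → Deriv S Γ ((Fm.disj A B) ::ₘ Δ)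
  | botL {Γ Δ} : Deriv S ((Fm.bot) ::ₘ Γ) Δ
  | allL {Γ Δ} {A : Fm S} {t : Tm S} : Tm.WF 0 t →
      Deriv S ((Fm.openF t 0 A) ::ₘ Γ) Δ → Deriv S ((Fm.all A) ::ₘ Γ) Δ
  | allR {Γ Δ} {A : Fm S} {x : ℕ} :
      x ∉ mFv Γ → x ∉ mFv Δ → x ∉ A.fv →
      Deriv S Γ ((Fm.openF (Tm.fvar x) 0 A) ::ₘ Δ) → Deriv S Γ ((Fm.all A) ::ₘ Δ)
  | exL {Γ Δ} {A : Fm S} {x : ℕ} :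
      x ∉ mFv Γ → x ∉ mFv Δ → x ∉ A.fv →
      Deriv S ((Fm.openF (Tm.fvar x) 0 A) ::ₘ Γ) Δ → Deriv S ((Fm.ex A) ::ₘ Γ) Δ
  | exR {Γ Δ} {A : Fm S} {t : Tm S} : Tm.WF 0 t →
      Deriv S Γ ((Fm.openF t 0 A) ::ₘ Δ) → Deriv S Γ ((Fm.ex A) ::ₘ Δ)
/- ## The translated language L' : explicit substitutions and de Bruijn indices -/

/-- Sorts of `L'`: `tm n` for terms in a context of `n` bound variables, and
`sb n p` for explicit substitutions mapping `p` variables to terms of sort `n`. -/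
inductive Srt : Type
  | tm : ℕ → Srt
  | sb : ℕ → ℕ → Srt
deriving DecidableEq

/-- Terms of `L'`.  `evar x s` is a named variable of sort `s`; `qvar i` is a
(formula-level) de Bruijn variable bound by a quantifier; `idx i n` is the de Bruijn
constant `iₙ` (`1 ≤ i ≤ n`); `fa f p a` is `fₚ(a)`; `sub t s` is `t[s]`;
`eid n`, `cons`, `up n`, `comp` are `idₙ`, cons `.`, `↑ₙ` and composition `∘`. -/
inductive ETm (S : BSig) : Type
  | evar : ℕ → Srt → ETm S
  | qvar : ℕ → ETm S
  | idx : ℕ → ℕ → ETm S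
  | fa : (f : S.Fn) → ℕ → (Fin (S.far f).length → ETm S) → ETm S
  | sub : ETm S → ETm S → ETm S
  | eid : ℕ → ETm S
  | cons : ETm S → ETm S → ETm S
  | up : ℕ → ETm S
  | comp : ETm S → ETm S → ETm S

variable {S : BSig}

/-- The iterated shift `↑^k` out of context `p`:
`↑_p ∘ (↑_{p+1} ∘ ⋯ ∘ ↑_{p+k-1})`, of sort `⟨p+k, p⟩` (`id_p` for `k = 0`). -/
def upChain (S : BSig) (p : ℕ) : ℕ → ETm S
  | 0 => .eid p
  | 1 => .up p
  | k + 2 => .comp (.up p) (upChain S (p + 1) (k + 1))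

/-- Sorting judgment for `L'`; `Θ` gives the sorts of the quantifier-bound variables. -/
inductive HasSort : List Srt → ETm S → Srt → Prop
  | evar {Θ x s} : HasSort Θ (.evar x s) s
  | qvar {Θ i s} : Θ[i]? = some s → HasSort Θ (.qvar i) s
  | idx {Θ i n} : 1 ≤ i → i ≤ n → HasSort Θ (.idx i n) (.tm n)
  | fa {Θ} {f : S.Fn} {p : ℕ} {a : Fin (S.far f).length → ETm S} :
      (∀ j, HasSort Θ (a j) (.tm (p + (S.far f).get j))) →
      HasSort Θ (.fa f p a) (.tm p)
  | sub {Θ t s n p} : HasSort Θ t (.tm p) → HasSort Θ s (.sb n p) →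
      HasSort Θ (.sub t s) (.tm n)
  | eid {Θ n} : HasSort Θ (.eid n) (.sb n n)
  | cons {Θ t s n p} : HasSort Θ t (.tm n) → HasSort Θ s (.sb n p) →
      HasSort Θ (.cons t s) (.sb n (p + 1))
  | up {Θ n} : HasSort Θ (.up n) (.sb (n + 1) n)
  | comp {Θ s₁ s₂ n p q} : HasSort Θ s₁ (.sb p n) → HasSort Θ s₂ (.sb q p) →
      HasSort Θ (.comp s₁ s₂) (.sb q n)

/-- The component `1[↑^j]` (of sort `q+k`, with `1` of sort `q+k-j`). -/
def shiftOne (S : BSig) (q k j : ℕ) : ETm S :=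
  if j = 0 then .idx 1 (q + k) else .sub (.idx 1 (q + k - j)) (upChain S (q + k - j) j)

/-- Auxiliary: builds `1[↑^j]. … .1[↑^{k-1}].(s ∘ ↑^k)`. -/
def liftAux (S : BSig) (q k : ℕ) (s : ETm S) : ℕ → ℕ → ETm S
  | 0, _ => .comp s (upChain S q k)
  | m + 1, j => .cons (shiftOne S q k j) (liftAux S q k s m (j + 1))

/-- The substitution `1.1[↑].….1[↑^{k−1}].(s ∘ ↑^k)` of sort `⟨q+k, p+k⟩`,
for `s` of sort `⟨q,p⟩` (just `s` when `k = 0`). -/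
def liftSub (S : BSig) (q k : ℕ) (s : ETm S) : ETm S :=
  match k with
  | 0 => s
  | k' + 1 => liftAux S q (k' + 1) s (k' + 1) 0

/-- One step of `σ`-rewriting (at the root or in any subterm). -/
inductive Rw : ETm S → ETm S → Prop
  -- the rule n+1 → 1[↑ⁿ]
  | ridx {i n : ℕ} : 1 ≤ i → i + 1 ≤ n →
      Rw (.idx (i + 1) n) (.sub (.idx 1 (n - i)) (upChain S (n - i) i))
  -- 1[t.s] → t
  | rhead {m : ℕ} {t s : ETm S} : Rw (.sub (.idx 1 m) (.cons t s)) t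
  -- t[id] → t
  | rtid {n : ℕ} {t : ETm S} : Rw (.sub t (.eid n)) t
  -- (t[s])[s'] → t[s ∘ s']
  | rclos {t s s' : ETm S} : Rw (.sub (.sub t s) s') (.sub t (.comp s s'))
  -- id ∘ s → s
  | ridl {n : ℕ} {s : ETm S} : Rw (.comp (.eid n) s) s
  -- ↑ ∘ (t.s) → s
  | rshcons {n : ℕ} {t s : ETm S} : Rw (.comp (.up n) (.cons t s)) s
  -- (s₁ ∘ s₂) ∘ s₃ → s₁ ∘ (s₂ ∘ s₃)
  | rassoc {s₁ s₂ s₃ : ETm S} : Rw (.comp (.comp s₁ s₂) s₃) (.comp s₁ (.comp s₂ s₃))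
  -- (t.s) ∘ s' → t[s'].(s ∘ s')
  | rmap {t s s' : ETm S} : Rw (.comp (.cons t s) s') (.cons (.sub t s') (.comp s s'))
  -- s ∘ id → s
  | ridr {n : ℕ} {s : ETm S} : Rw (.comp s (.eid n)) s
  -- 1.↑ → id
  | rvarsh {n : ℕ} : Rw (.cons (.idx 1 (n + 1)) (.up n)) (.eid (n + 1))
  -- 1[s].(↑ ∘ s) → s
  | rscons {m n : ℕ} {s : ETm S} : Rw (.cons (.sub (.idx 1 m) s) (.comp (.up n) s)) s
  -- fₚ(t₁,…,tₙ)[s] → f_q(t₁[1.1[↑].….1[↑^{k₁−1}].s∘↑^{k₁}], …) for s of sort ⟨q,p⟩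
  | rfa {f : S.Fn} {p q : ℕ} {a : Fin (S.far f).length → ETm S} {s : ETm S} :
      (∃ Θ, HasSort Θ s (.sb q p)) →
      Rw (.sub (.fa f p a) s)
         (.fa f q (fun i => .sub (a i) (liftSub S q ((S.far f).get i) s)))
  -- congruence: rewriting in subterms
  | cfa {f : S.Fn} {p : ℕ} {a : Fin (S.far f).length → ETm S}
      {i : Fin (S.far f).length} {t' : ETm S} :
      Rw (a i) t' → Rw (.fa f p a) (.fa f p (Function.update a i t'))
  | csub₁ {t t' s : ETm S} : Rw t t' → Rw (.sub t s) (.sub t' s)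
  | csub₂ {t s s' : ETm S} : Rw s s' → Rw (.sub t s) (.sub t s')
  | ccons₁ {t t' s : ETm S} : Rw t t' → Rw (.cons t s) (.cons t' s)
  | ccons₂ {t s s' : ETm S} : Rw s s' → Rw (.cons t s) (.cons t s')
  | ccomp₁ {t t' s : ETm S} : Rw t t' → Rw (.comp t s) (.comp t' s)
  | ccomp₂ {t s s' : ETm S} : Rw s s' → Rw (.comp t s) (.comp t s')

/-- The congruence `≡` on terms of `L'` generated by the rewrite system `σ`. -/
def TmConv (S : BSig) : ETm S → ETm S → Prop := Relation.EqvGen Rw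

/-- A term is `σ`-normal if no rewrite step applies to it. -/
def ENormal (t : ETm S) : Prop := ∀ u, ¬ Rw t u

/-- Propositions of `L'` (quantifiers bind one variable of the indicated sort,
represented by formula-level de Bruijn indices `qvar`). -/
inductive EFm (S : BSig) : Type
  | atom : (P : S.Pr) → (Fin (S.par P).length → ETm S) → EFm S
  | imp : EFm S → EFm S → EFm S
  | conj : EFm S → EFm S → EFm S
  | disj : EFm S → EFm S → EFm S
  | bot : EFm S
  | all : Srt → EFm S → EFm S
  | ex : Srt → EFm S → EFm S

/-- Replacement of the quantifier-bound variable `k` by a term (in a term of `L'`). -/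
def ETm.openE (u : ETm S) (k : ℕ) : ETm S → ETm S
  | .qvar i => if i = k then u else .qvar i
  | .evar x s => .evar x s
  | .idx i n => .idx i n
  | .fa f p a => .fa f p (fun j => ETm.openE u k (a j))
  | .sub t s => .sub (ETm.openE u k t) (ETm.openE u k s)
  | .eid n => .eid n
  | .cons t s => .cons (ETm.openE u k t) (ETm.openE u k s)
  | .up n => .up n
  | .comp t s => .comp (ETm.openE u k t) (ETm.openE u k s)

/-- Instantiation of the quantifier-bound variable `k` of a proposition of `L'`. -/
def EFm.openF (u : ETm S) : ℕ → EFm S → EFm S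
  | k, .atom P a => .atom P (fun i => ETm.openE u k (a i))
  | k, .imp A B => .imp (EFm.openF u k A) (EFm.openF u k B)
  | k, .conj A B => .conj (EFm.openF u k A) (EFm.openF u k B)
  | k, .disj A B => .disj (EFm.openF u k A) (EFm.openF u k B)
  | _, .bot => .bot
  | k, .all s A => .all s (EFm.openF u (k + 1) A)
  | k, .ex s A => .ex s (EFm.openF u (k + 1) A)

/-- Names of the free named variables of a term of `L'`. -/
def ETm.fvs : ETm S → Set ℕ
  | .evar x _ => {x}
  | .qvar _ => ∅
  | .idx _ _ => ∅
  | .fa _ _ a => ⋃ i, (a i).fvs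
  | .sub t s => t.fvs ∪ s.fvs
  | .eid _ => ∅
  | .cons t s => t.fvs ∪ s.fvs
  | .up _ => ∅
  | .comp t s => t.fvs ∪ s.fvs

/-- Names of the free named variables of a proposition of `L'`. -/
def EFm.fvs : EFm S → Set ℕ
  | .atom _ a => ⋃ i, (a i).fvs
  | .imp A B => A.fvs ∪ B.fvs
  | .conj A B => A.fvs ∪ B.fvs
  | .disj A B => A.fvs ∪ B.fvs
  | .bot => ∅
  | .all _ A => A.fvs
  | .ex _ A => A.fvs

/-- Free variables of a multiset of `L'`-propositions. -/
def mFvE (Γ : Multiset (EFm S)) : Set ℕ := {x | ∃ A ∈ Γ, x ∈ A.fvs}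

/-- The congruence on propositions of `L'` generated by `σ`
(congruent atoms have `≡`-congruent arguments). -/
inductive FConv : EFm S → EFm S → Prop
  | atom {P : S.Pr} {a b : Fin (S.par P).length → ETm S} :
      (∀ i, TmConv S (a i) (b i)) → FConv (.atom P a) (.atom P b)
  | imp {A A' B B'} : FConv A A' → FConv B B' → FConv (.imp A B) (.imp A' B')
  | conj {A A' B B'} : FConv A A' → FConv B B' → FConv (.conj A B) (.conj A' B')
  | disj {A A' B B'} : FConv A A' → FConv B B' → FConv (.disj A B) (.disj A' B')
  | bot : FConv .bot .bot
  | all {s A A'} : FConv A A' → FConv (.all s A) (.all s A')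
  | ex {s A A'} : FConv A A' → FConv (.ex s A) (.ex s A')

/-- Sequent calculus modulo a congruence `E`, with proof length recorded:
the standard classical rules, where principal formulas need only be congruent
to the displayed shape.  `DerivM E n Γ Δ` : `Γ ⊢ Δ` has a proof of length `n`. -/
inductive DerivM (E : EFm S → EFm S → Prop) : ℕ → Multiset (EFm S) → Multiset (EFm S) → Prop
  | ax {A B : EFm S} : E A B → DerivM E 1 {A} {B}
  | cut {m n Γ Δ} {A B : EFm S} : E A B →
      DerivM E m (A ::ₘ Γ) Δ → DerivM E n Γ (B ::ₘ Δ) → DerivM E (m + n + 1) Γ Δ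
  | contrL {m Γ Δ} {A B₁ B₂ : EFm S} : E A B₁ → E A B₂ →
      DerivM E m (B₁ ::ₘ B₂ ::ₘ Γ) Δ → DerivM E (m + 1) (A ::ₘ Γ) Δ
  | contrR {m Γ Δ} {A B₁ B₂ : EFm S} : E A B₁ → E A B₂ →
      DerivM E m Γ (B₁ ::ₘ B₂ ::ₘ Δ) → DerivM E (m + 1) Γ (A ::ₘ Δ)
  | weakL {m Γ Δ} {A : EFm S} : DerivM E m Γ Δ → DerivM E (m + 1) (A ::ₘ Γ) Δ
  | weakR {m Γ Δ} {A : EFm S} : DerivM E m Γ Δ → DerivM E (m + 1) Γ (A ::ₘ Δ)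
  | impL {m n Γ Δ} {C A B : EFm S} : E C (.imp A B) →
      DerivM E m Γ (A ::ₘ Δ) → DerivM E n (B ::ₘ Γ) Δ → DerivM E (m + n + 1) (C ::ₘ Γ) Δ
  | impR {m Γ Δ} {C A B : EFm S} : E C (.imp A B) →
      DerivM E m (A ::ₘ Γ) (B ::ₘ Δ) → DerivM E (m + 1) Γ (C ::ₘ Δ)
  | conjL {m Γ Δ} {C A B : EFm S} : E C (.conj A B) →
      DerivM E m (A ::ₘ B ::ₘ Γ) Δ → DerivM E (m + 1) (C ::ₘ Γ) Δ
  | conjR {m n Γ Δ} {C A B : EFm S} : E C (.conj A B) →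
      DerivM E m Γ (A ::ₘ Δ) → DerivM E n Γ (B ::ₘ Δ) → DerivM E (m + n + 1) Γ (C ::ₘ Δ)
  | disjL {m n Γ Δ} {C A B : EFm S} : E C (.disj A B) →
      DerivM E m (A ::ₘ Γ) Δ → DerivM E n (B ::ₘ Γ) Δ → DerivM E (m + n + 1) (C ::ₘ Γ) Δ
  | disjR {m Γ Δ} {C A B : EFm S} : E C (.disj A B) →
      DerivM E m Γ (A ::ₘ B ::ₘ Δ) → DerivM E (m + 1) Γ (C ::ₘ Δ)
  | botL {Γ Δ} {A : EFm S} : E A .bot → DerivM E 1 (A ::ₘ Γ) Δ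
  | allL {m Γ Δ} {B C A : EFm S} {s : Srt} {t : ETm S} :
      E B (.all s A) → E C (EFm.openF t 0 A) → HasSort [] t s →
      DerivM E m (C ::ₘ Γ) Δ → DerivM E (m + 1) (B ::ₘ Γ) Δ
  | allR {m Γ Δ} {B A : EFm S} {s : Srt} {x : ℕ} :
      E B (.all s A) → x ∉ mFvE Γ → x ∉ mFvE Δ → x ∉ A.fvs →
      DerivM E m Γ ((EFm.openF (.evar x s) 0 A) ::ₘ Δ) → DerivM E (m + 1) Γ (B ::ₘ Δ)
  | exL {m Γ Δ} {B A : EFm S} {s : Srt} {x : ℕ} :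
      E B (.ex s A) → x ∉ mFvE Γ → x ∉ mFvE Δ → x ∉ A.fvs →
      DerivM E m ((EFm.openF (.evar x s) 0 A) ::ₘ Γ) Δ → DerivM E (m + 1) (B ::ₘ Γ) Δ
  | exR {m Γ Δ} {B C A : EFm S} {s : Srt} {t : ETm S} :
      E B (.ex s A) → E C (EFm.openF t 0 A) → HasSort [] t s →
      DerivM E m Γ (C ::ₘ Δ) → DerivM E (m + 1) Γ (B ::ₘ Δ)

/-- Provability in sequent calculus modulo the congruence `E`. -/
def DerivMod (E : EFm S → EFm S → Prop) (Γ Δ : Multiset (EFm S)) : Prop :=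
  ∃ n, DerivM E n Γ Δ

/- ## Pre-cooking : the translation from L to L' -/

/-- Pre-cooking of a term at binder depth `p` (the length of the list `l` of
bound variables): binder-bound variables become de Bruijn constants, other
variables are protected by the shift `↑^p`. -/
def Ft (S : BSig) : (p : ℕ) → Tm S → ETm S
  | p, .bvar i =>
      if i < p then .idx (i + 1) p
      else if p = 0 then .qvar (i - p) else .sub (.qvar (i - p)) (upChain S 0 p)
  | p, .fvar x =>
      if p = 0 then .evar x (.tm 0) else .sub (.evar x (.tm 0)) (upChain S 0 p)
  | p, .app f a => .fa f p (fun i => Ft S (p + (S.far f).get i) (a i))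

/-- Pre-cooking of a proposition: `A' = F(A, ε)`. -/
def Ff (S : BSig) : Fm S → EFm S
  | .atom P a => .atom P (fun i => Ft S ((S.par P).get i) (a i))
  | .imp A B => .imp (Ff S A) (Ff S B)
  | .conj A B => .conj (Ff S A) (Ff S B)
  | .disj A B => .disj (Ff S A) (Ff S B)
  | .bot => .bot
  | .all A => .all (.tm 0) (Ff S A)
  | .ex A => .ex (.tm 0) (Ff S A)

/-- Grafting `⟨v/x⟩t` in `L'`: textual replacement of the (sort-0) variable `x` by `v`. -/
def ETm.graft (x : ℕ) (v : ETm S) : ETm S → ETm S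
  | .evar y s => if y = x ∧ s = .tm 0 then v else .evar y s
  | .qvar i => .qvar i
  | .idx i n => .idx i n
  | .fa f p a => .fa f p (fun j => ETm.graft x v (a j))
  | .sub t s => .sub (ETm.graft x v t) (ETm.graft x v s)
  | .eid n => .eid n
  | .cons t s => .cons (ETm.graft x v t) (ETm.graft x v s)
  | .up n => .up n
  | .comp t s => .comp (ETm.graft x v t) (ETm.graft x v s)

/-- Substitution `(v/x)A` of a (quantifier-closed) term for a variable in a
proposition of `L'` (capture-avoiding, since terms of `L'` have no binders). -/
def EFm.graft (x : ℕ) (v : ETm S) : EFm S → EFm S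
  | .atom P a => .atom P (fun i => ETm.graft x v (a i))
  | .imp A B => .imp (EFm.graft x v A) (EFm.graft x v B)
  | .conj A B => .conj (EFm.graft x v A) (EFm.graft x v B)
  | .disj A B => .disj (EFm.graft x v A) (EFm.graft x v B)
  | .bot => .bot
  | .all s A => .all s (EFm.graft x v A)
  | .ex s A => .ex s (EFm.graft x v A)

/- ## F-terms and F-propositions -/

/-- All named variables occurring in the term have sort `0`. -/
def ETm.vars0 : ETm S → Prop
  | .evar _ s => s = .tm 0
  | .qvar _ => True
  | .idx _ _ => True
  | .fa _ _ a => ∀ i, (a i).vars0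
  | .sub t s => t.vars0 ∧ s.vars0
  | .eid _ => True
  | .cons t s => t.vars0 ∧ s.vars0
  | .up _ => True
  | .comp t s => t.vars0 ∧ s.vars0

/-- All named variables of the proposition have sort `0`, and all its
quantifiers bind variables of sort `0`. -/
def EFm.vars0F : EFm S → Prop
  | .atom _ a => ∀ i, (a i).vars0
  | .imp A B => A.vars0F ∧ B.vars0F
  | .conj A B => A.vars0F ∧ B.vars0F
  | .disj A B => A.vars0F ∧ B.vars0F
  | .bot => True
  | .all s A => s = .tm 0 ∧ A.vars0F
  | .ex s A => s = .tm 0 ∧ A.vars0F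

/-- The proposition is `σ`-normal: every term occurring in it is `σ`-normal. -/
def EFm.TmsNormal : EFm S → Prop
  | .atom _ a => ∀ i, ENormal (a i)
  | .imp A B => A.TmsNormal ∧ B.TmsNormal
  | .conj A B => A.TmsNormal ∧ B.TmsNormal
  | .disj A B => A.TmsNormal ∧ B.TmsNormal
  | .bot => True
  | .all _ A => A.TmsNormal
  | .ex _ A => A.TmsNormal

/-- Well-sortedness of a proposition of `L'` in a context `Θ` of quantified sorts. -/
def EFmSorted : List Srt → EFm S → Prop
  | Θ, .atom P a => ∀ i, HasSort Θ (a i) (.tm ((S.par P).get i))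
  | Θ, .imp A B => EFmSorted Θ A ∧ EFmSorted Θ B
  | Θ, .conj A B => EFmSorted Θ A ∧ EFmSorted Θ B
  | Θ, .disj A B => EFmSorted Θ A ∧ EFmSorted Θ B
  | _, .bot => True
  | Θ, .all s A => EFmSorted (s :: Θ) A
  | Θ, .ex s A => EFmSorted (s :: Θ) A

/-- An F-proposition: a `σ`-normal, well-sorted proposition of `L'` containing
only variables of sort `0`. -/
def FProp (A : EFm S) : Prop := A.TmsNormal ∧ A.vars0F ∧ EFmSorted [] A

/-- An F-term of sort `0`: a `σ`-normal, well-sorted term of sort `0` of `L'`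
containing only variables of sort `0`. -/
def FTerm0 (t : ETm S) : Prop := ENormal t ∧ t.vars0 ∧ HasSort [] t (.tm 0)
/- ## Restricted proofs: every proposition occurring satisfies `TF`,
every quantifier witness satisfies `TT`. -/

variable {S' : BSig}

/-- All members of a multiset satisfy `TF`. -/
def AllTF {S : BSig} (TF : EFm S → Prop) (Γ : Multiset (EFm S)) : Prop := ∀ X ∈ Γ, TF X

/-- Sequent calculus modulo `E` in which every proposition occurring in the proof
satisfies `TF` and every witness of a `∀`-left or `∃`-right rule satisfies `TT`. -/
inductive DerivR {S : BSig} (E : EFm S → EFm S → Prop) (TF : EFm S → Prop) (TT : ETm S → Prop) :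
    Multiset (EFm S) → Multiset (EFm S) → Prop
  | ax {A B : EFm S} : TF A → TF B → E A B → DerivR E TF TT {A} {B}
  | cut {Γ Δ} {A B : EFm S} : AllTF TF Γ → AllTF TF Δ → TF A → TF B → E A B →
      DerivR E TF TT (A ::ₘ Γ) Δ → DerivR E TF TT Γ (B ::ₘ Δ) → DerivR E TF TT Γ Δ
  | contrL {Γ Δ} {A B₁ B₂ : EFm S} : AllTF TF (A ::ₘ Γ) → AllTF TF Δ →
      TF B₁ → TF B₂ → E A B₁ → E A B₂ →
      DerivR E TF TT (B₁ ::ₘ B₂ ::ₘ Γ) Δ → DerivR E TF TT (A ::ₘ Γ) Δ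
  | contrR {Γ Δ} {A B₁ B₂ : EFm S} : AllTF TF Γ → AllTF TF (A ::ₘ Δ) →
      TF B₁ → TF B₂ → E A B₁ → E A B₂ →
      DerivR E TF TT Γ (B₁ ::ₘ B₂ ::ₘ Δ) → DerivR E TF TT Γ (A ::ₘ Δ)
  | weakL {Γ Δ} {A : EFm S} : AllTF TF (A ::ₘ Γ) → AllTF TF Δ →
      DerivR E TF TT Γ Δ → DerivR E TF TT (A ::ₘ Γ) Δ
  | weakR {Γ Δ} {A : EFm S} : AllTF TF Γ → AllTF TF (A ::ₘ Δ) →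
      DerivR E TF TT Γ Δ → DerivR E TF TT Γ (A ::ₘ Δ)
  | impL {Γ Δ} {C A B : EFm S} : AllTF TF (C ::ₘ Γ) → AllTF TF Δ → TF A → TF B →
      E C (.imp A B) →
      DerivR E TF TT Γ (A ::ₘ Δ) → DerivR E TF TT (B ::ₘ Γ) Δ → DerivR E TF TT (C ::ₘ Γ) Δ
  | impR {Γ Δ} {C A B : EFm S} : AllTF TF Γ → AllTF TF (C ::ₘ Δ) → TF A → TF B →
      E C (.imp A B) →
      DerivR E TF TT (A ::ₘ Γ) (B ::ₘ Δ) → DerivR E TF TT Γ (C ::ₘ Δ)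
  | conjL {Γ Δ} {C A B : EFm S} : AllTF TF (C ::ₘ Γ) → AllTF TF Δ → TF A → TF B →
      E C (.conj A B) →
      DerivR E TF TT (A ::ₘ B ::ₘ Γ) Δ → DerivR E TF TT (C ::ₘ Γ) Δ
  | conjR {Γ Δ} {C A B : EFm S} : AllTF TF Γ → AllTF TF (C ::ₘ Δ) → TF A → TF B →
      E C (.conj A B) →
      DerivR E TF TT Γ (A ::ₘ Δ) → DerivR E TF TT Γ (B ::ₘ Δ) → DerivR E TF TT Γ (C ::ₘ Δ)
  | disjL {Γ Δ} {C A B : EFm S} : AllTF TF (C ::ₘ Γ) → AllTF TF Δ → TF A → TF B →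
      E C (.disj A B) →
      DerivR E TF TT (A ::ₘ Γ) Δ → DerivR E TF TT (B ::ₘ Γ) Δ → DerivR E TF TT (C ::ₘ Γ) Δ
  | disjR {Γ Δ} {C A B : EFm S} : AllTF TF Γ → AllTF TF (C ::ₘ Δ) → TF A → TF B →
      E C (.disj A B) →
      DerivR E TF TT Γ (A ::ₘ B ::ₘ Δ) → DerivR E TF TT Γ (C ::ₘ Δ)
  | botL {Γ Δ} {A : EFm S} : AllTF TF (A ::ₘ Γ) → AllTF TF Δ → E A .bot →
      DerivR E TF TT (A ::ₘ Γ) Δ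
  | allL {Γ Δ} {B C A : EFm S} {s : Srt} {t : ETm S} :
      AllTF TF (B ::ₘ Γ) → AllTF TF Δ → TF C → TT t →
      E B (.all s A) → E C (EFm.openF t 0 A) → HasSort [] t s →
      DerivR E TF TT (C ::ₘ Γ) Δ → DerivR E TF TT (B ::ₘ Γ) Δ
  | allR {Γ Δ} {B A : EFm S} {s : Srt} {x : ℕ} :
      AllTF TF Γ → AllTF TF (B ::ₘ Δ) → TF (EFm.openF (.evar x s) 0 A) →
      E B (.all s A) → x ∉ mFvE Γ → x ∉ mFvE Δ → x ∉ A.fvs →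
      DerivR E TF TT Γ ((EFm.openF (.evar x s) 0 A) ::ₘ Δ) → DerivR E TF TT Γ (B ::ₘ Δ)
  | exL {Γ Δ} {B A : EFm S} {s : Srt} {x : ℕ} :
      AllTF TF (B ::ₘ Γ) → AllTF TF Δ → TF (EFm.openF (.evar x s) 0 A) →
      E B (.ex s A) → x ∉ mFvE Γ → x ∉ mFvE Δ → x ∉ A.fvs →
      DerivR E TF TT ((EFm.openF (.evar x s) 0 A) ::ₘ Γ) Δ → DerivR E TF TT (B ::ₘ Γ) Δ
  | exR {Γ Δ} {B C A : EFm S} {s : Srt} {t : ETm S} :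
      AllTF TF Γ → AllTF TF (B ::ₘ Δ) → TF C → TT t →
      E B (.ex s A) → E C (EFm.openF t 0 A) → HasSort [] t s →
      DerivR E TF TT Γ (C ::ₘ Δ) → DerivR E TF TT Γ (B ::ₘ Δ)


/- ## Part 1: an untyped model of the calculus of explicit substitutions -/

namespace KeyF

/-- left injection of variable addresses -/
def iL (a : ℕ) : ℕ := Equiv.natSumNatEquivNat (Sum.inl a)
/-- right injection of variable addresses -/
def iR (a : ℕ) : ℕ := Equiv.natSumNatEquivNat (Sum.inr a)
/-- case analysis on variable addresses -/
def cs {α : Type} (f g : ℕ → α) (a : ℕ) : α := Sum.elim f g (Equiv.natSumNatEquivNat.symm a)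

@[simp] theorem cs_iL {α : Type} (f g : ℕ → α) (a : ℕ) : cs f g (iL a) = f a := by
  simp [cs, iL]
@[simp] theorem cs_iR {α : Type} (f g : ℕ → α) (a : ℕ) : cs f g (iR a) = g a := by
  simp [cs, iR]

theorem ext_LR {α : Type} {F G : ℕ → α} (h1 : ∀ a, F (iL a) = G (iL a))
    (h2 : ∀ a, F (iR a) = G (iR a)) : F = G := by
  funext a
  obtain ⟨b, rfl⟩ := Equiv.natSumNatEquivNat.surjective a
  rcases b with b | b
  · exact h1 b
  · exact h2 b

theorem iR_inj {a b : ℕ} (h : iR a = iR b) : a = b := by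
  have := Equiv.natSumNatEquivNat.injective h
  simpa using this
theorem iL_ne_iR {a b : ℕ} (h : iL a = iR b) : False := by
  have := Equiv.natSumNatEquivNat.injective h
  simp at this

/-- the address of the `i`-th de Bruijn index -/
def ix : ℕ → ℕ
  | 0 => iL 0
  | i + 1 => iR (ix i)

theorem ix_inj : ∀ {i j : ℕ}, ix i = ix j → i = j
  | 0, 0, _ => rfl
  | 0, _ + 1, h => (iL_ne_iR h).elim
  | _ + 1, 0, h => (iL_ne_iR h.symm).elim
  | _ + 1, _ + 1, h => congrArg (· + 1) (ix_inj (iR_inj h))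

theorem ix_iter (i : ℕ) : iR^[i] (iL 0) = ix i := by
  induction i with
  | zero => rfl
  | succ i ih => rw [Function.iterate_succ_apply', ih]; rfl

/-- Semantic terms. -/
inductive V (S : BSig) : Type
  | var : ℕ → V S
  | con : ℕ → V S
  | qcon : ℕ → V S
  | node : (f : S.Fn) → (Fin (S.far f).length → V S) → V S

variable {S : BSig}

/-- lifting of a renaming -/
def liftR (g : ℕ → ℕ) : ℕ → ℕ := cs iL (fun a => iR (g a))

/-- renaming -/
def ren : (ℕ → ℕ) → V S → V S
  | g, .var a => .var (g a)
  | _, .con x => .con x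
  | _, .qcon x => .qcon x
  | g, .node f as => .node f (fun i => ren (liftR^[(S.far f).get i] g) (as i))

/-- lifting of a substitution -/
def liftS (s : ℕ → V S) : ℕ → V S := cs (fun a => .var (iL a)) (fun a => ren iR (s a))

/-- substitution -/
def sbs : (ℕ → V S) → V S → V S
  | s, .var a => s a
  | _, .con x => .con x
  | _, .qcon x => .qcon x
  | s, .node f as => .node f (fun i => sbs (liftS^[(S.far f).get i] s) (as i))

theorem liftR_comp (g h : ℕ → ℕ) : liftR g ∘ liftR h = liftR (g ∘ h) := by
  apply ext_LR <;> intro a <;> simp [liftR]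

theorem liftR_iter_comp (g h : ℕ → ℕ) (k : ℕ) :
    liftR^[k] g ∘ liftR^[k] h = liftR^[k] (g ∘ h) := by
  induction k with
  | zero => rfl
  | succ k ih => simp only [Function.iterate_succ_apply', liftR_comp, ih]

theorem ren_ren (t : V S) : ∀ g h : ℕ → ℕ, ren g (ren h t) = ren (g ∘ h) t := by
  induction t with
  | var a => intros; rfl
  | con a => intros; rfl
  | qcon a => intros; rfl
  | node f as ih => intro g h; simp only [ren, ih, liftR_iter_comp]

theorem liftS_liftR (s : ℕ → V S) (h : ℕ → ℕ) : liftS s ∘ liftR h = liftS (s ∘ h) := by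
  apply ext_LR <;> intro a <;> simp [liftR, liftS]

theorem liftS_liftR_iter (s : ℕ → V S) (h : ℕ → ℕ) (k : ℕ) :
    liftS^[k] s ∘ liftR^[k] h = liftS^[k] (s ∘ h) := by
  induction k with
  | zero => rfl
  | succ k ih => simp only [Function.iterate_succ_apply', liftS_liftR, ih]

theorem sbs_ren (t : V S) : ∀ (s : ℕ → V S) (h : ℕ → ℕ), sbs s (ren h t) = sbs (s ∘ h) t := by
  induction t with
  | var a => intros; rfl
  | con a => intros; rfl
  | qcon a => intros; rfl
  | node f as ih => intro g h; simp only [ren, sbs, ih, liftS_liftR_iter]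

theorem liftR_liftS (g : ℕ → ℕ) (s : ℕ → V S) :
    ren (liftR g) ∘ liftS s = liftS (ren g ∘ s) := by
  apply ext_LR <;> intro a
  · simp [liftR, liftS, ren]
  · simp only [liftS, Function.comp_apply, cs_iR, ren_ren]
    congr 1
    funext b; simp [liftR]

theorem liftR_liftS_iter (g : ℕ → ℕ) (s : ℕ → V S) (k : ℕ) :
    ren (liftR^[k] g) ∘ liftS^[k] s = liftS^[k] (ren g ∘ s) := by
  induction k with
  | zero => rfl
  | succ k ih => simp only [Function.iterate_succ_apply', liftR_liftS, ih]

theorem ren_sbs (t : V S) : ∀ (g : ℕ → ℕ) (s : ℕ → V S), ren g (sbs s t) = sbs (ren g ∘ s) t := by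
  induction t with
  | var a => intros; rfl
  | con a => intros; rfl
  | qcon a => intros; rfl
  | node f as ih => intro g h; simp only [ren, sbs, ih, liftR_liftS_iter]

theorem liftS_liftS (s s' : ℕ → V S) :
    sbs (liftS s) ∘ liftS s' = liftS (sbs s ∘ s') := by
  apply ext_LR <;> intro a
  · simp [liftS, sbs]
  · simp only [liftS, Function.comp_apply, cs_iR, sbs_ren, ren_sbs]
    congr 1
    funext b; simp

theorem liftS_liftS_iter (s s' : ℕ → V S) (k : ℕ) :
    sbs (liftS^[k] s) ∘ liftS^[k] s' = liftS^[k] (sbs s ∘ s') := by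
  induction k with
  | zero => rfl
  | succ k ih => simp only [Function.iterate_succ_apply', liftS_liftS, ih]

theorem sbs_sbs (t : V S) : ∀ (s s' : ℕ → V S), sbs s (sbs s' t) = sbs (sbs s ∘ s') t := by
  induction t with
  | var a => intros; rfl
  | con a => intros; rfl
  | qcon a => intros; rfl
  | node f as ih => intro g h; simp only [sbs, ih, liftS_liftS_iter]

theorem liftS_varg (g : ℕ → ℕ) : liftS (fun a => (V.var (g a) : V S)) = fun a => .var (liftR g a) := by
  apply ext_LR <;> intro a <;> simp [liftR, liftS, ren]

theorem liftS_varg_iter (g : ℕ → ℕ) (k : ℕ) :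
    liftS^[k] (fun a => (V.var (g a) : V S)) = fun a => .var (liftR^[k] g a) := by
  induction k with
  | zero => rfl
  | succ k ih => simp only [Function.iterate_succ_apply', ih, liftS_varg]

theorem sbs_varg (t : V S) : ∀ (g : ℕ → ℕ), sbs (fun a => (V.var (g a) : V S)) t = ren g t := by
  induction t with
  | var a => intros; rfl
  | con a => intros; rfl
  | qcon a => intros; rfl
  | node f as ih => intro g; simp only [ren, sbs, liftS_varg_iter, ih]

theorem liftS_var : liftS (V.var : ℕ → V S) = V.var := by
  apply ext_LR <;> intro a <;> simp [liftS, ren]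

theorem liftS_var_iter (k : ℕ) : liftS^[k] (V.var : ℕ → V S) = V.var := by
  induction k with
  | zero => rfl
  | succ k ih => simp only [Function.iterate_succ_apply', ih, liftS_var]

theorem sbs_var (t : V S) : sbs V.var t = t := by
  induction t with
  | var a => rfl
  | con a => rfl
  | qcon a => rfl
  | node f as ih => simp only [sbs, liftS_var_iter, ih]

/-- Semantic values of raw terms. -/
abbrev D (S : BSig) := ℕ → V S

/-- Interpretation of raw terms. -/
def den (ρ : ℕ → Srt → D S) (η : ℕ → D S) : ETm S → D S
  | .evar x s => ρ x s
  | .qvar i => η i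
  | .idx i _ => fun a => .var (iR^[i - 1] (iL a))
  | .fa f _ as => fun _ => .node f (fun i => den ρ η (as i) 0)
  | .sub t s => fun a => sbs (den ρ η s) (den ρ η t a)
  | .eid _ => V.var
  | .cons t s => cs (den ρ η t) (den ρ η s)
  | .up _ => fun a => .var (iR a)
  | .comp t s => fun a => sbs (den ρ η s) (den ρ η t a)

variable {ρ : ℕ → Srt → D S} {η : ℕ → D S}

theorem den_upChain (k : ℕ) : ∀ p, den ρ η (upChain S p k) = fun a => .var (iR^[k] a) := by
  induction k using Nat.strong_induction_on with
  | _ k ih =>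
    intro p
    match k with
    | 0 => rfl
    | 1 => rfl
    | k + 2 =>
      simp only [upChain, den, ih (k + 1) (by omega), sbs]
      funext a
      rw [← Function.iterate_succ_apply]

theorem den_shiftOne (q k j : ℕ) :
    den ρ η (shiftOne S q k j) = fun a => .var (iR^[j] (iL a)) := by
  unfold shiftOne
  split
  · subst_vars; rfl
  · simp only [den, den_upChain, sbs]
    funext a
    rfl

theorem den_liftAux (q k : ℕ) (s : ETm S) (m : ℕ) : ∀ j, m + j = k →
    den ρ η (liftAux S q k s m j) = fun a => ren (iR^[j]) (liftS^[m] (den ρ η s) a) := by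
  induction m with
  | zero =>
    intro j hj
    obtain rfl : j = k := by omega
    simp only [liftAux, den, den_upChain, sbs_varg]
    rfl
  | succ m ih =>
    intro j hj
    simp only [liftAux, den, den_shiftOne, ih (j + 1) (by omega), Function.iterate_succ_apply']
    apply ext_LR <;> intro a
    · simp [liftS, ren]
    · simp only [liftS, cs_iR, ren_ren]
      congr 1

theorem ren_id (t : V S) : ren id t = t := by
  rw [← sbs_varg]; exact sbs_var t

theorem den_liftSub (q k : ℕ) (s : ETm S) :
    den ρ η (liftSub S q k s) = liftS^[k] (den ρ η s) := by
  cases k with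
  | zero => rfl
  | succ k =>
    simp only [liftSub]
    rw [den_liftAux _ _ _ _ _ (by omega)]
    funext a
    exact ren_id _

theorem den_Rw {t u : ETm S} (h : Rw t u) : den ρ η t = den ρ η u := by
  induction h with
  | @ridx i n h1 h2 =>
    simp only [den, den_upChain, sbs]
    rfl
  | rhead => funext a; simp [den, sbs]
  | rtid => funext a; simp [den, sbs_var]
  | rclos => funext a; simp only [den, sbs_sbs]; rfl
  | ridl => funext a; simp [den, sbs]
  | rshcons => funext a; simp [den, sbs]
  | rassoc => funext a; simp only [den, sbs_sbs]; rfl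
  | rmap => apply ext_LR <;> intro a <;> simp [den]
  | ridr => funext a; simp [den, sbs_var]
  | rvarsh => apply ext_LR <;> intro a <;> simp [den]
  | rscons => apply ext_LR <;> intro a <;> simp [den, sbs]
  | rfa h => funext a; simp only [den, sbs, den_liftSub]
  | @cfa f p a i t' h ih =>
    funext b
    simp only [den]
    congr 1
    funext j
    by_cases hj : j = i
    · subst hj; simp [ih]
    · simp [Function.update_of_ne hj]
  | csub₁ h ih => simp only [den, ih]
  | csub₂ h ih => simp only [den, ih]
  | ccons₁ h ih => simp only [den, ih]
  | ccons₂ h ih => simp only [den, ih]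
  | ccomp₁ h ih => simp only [den, ih]
  | ccomp₂ h ih => simp only [den, ih]

theorem den_conv {t u : ETm S} (h : TmConv S t u) : den ρ η t = den ρ η u := by
  induction h with
  | rel _ _ h => exact den_Rw h
  | refl => rfl
  | symm _ _ _ ih => exact ih.symm
  | trans _ _ _ _ _ ih1 ih2 => exact ih1.trans ih2

end KeyF

/- ## Part 2: sorted semantics -/

namespace KeyF

variable {S : BSig}

/-- Semantic terms at binder depth `n`, with `m` quantified variables. -/
def WF (m : ℕ) : ℕ → V S → Prop
  | n, .var a => ∃ i, i < n ∧ a = ix i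
  | _, .con _ => True
  | _, .qcon i => i < m
  | n, .node f as => ∀ j, WF m (n + (S.far f).get j) (as j)

/-- Partial equivalence relation on values attached to a sort. -/
def G (m : ℕ) : Srt → D S → D S → Prop
  | .tm n, d, d' => d 0 = d' 0 ∧ WF m n (d 0)
  | .sb n p, d, d' => ∀ i, i < p → d (ix i) = d' (ix i) ∧ WF m n (d (ix i))

/-- renamings respecting depth -/
def RenOK (n p : ℕ) (g : ℕ → ℕ) : Prop := ∀ i, i < p → ∃ j, j < n ∧ g (ix i) = ix j

theorem RenOK.lift {n p : ℕ} {g : ℕ → ℕ} (h : RenOK n p g) : RenOK (n + 1) (p + 1) (liftR g) := by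
  intro i hi
  cases i with
  | zero => exact ⟨0, by omega, by simp [liftR, ix]⟩
  | succ i =>
    obtain ⟨j, hj, e⟩ := h i (by omega)
    exact ⟨j + 1, by omega, by simp [liftR, ix, e]⟩

theorem RenOK.lift_iter {n p : ℕ} {g : ℕ → ℕ} (h : RenOK n p g) (k : ℕ) :
    RenOK (n + k) (p + k) (liftR^[k] g) := by
  induction k with
  | zero => exact h
  | succ k ih => rw [Function.iterate_succ_apply']; exact ih.lift

theorem WF_ren {m : ℕ} (t : V S) : ∀ {n p : ℕ} {g : ℕ → ℕ}, RenOK n p g → WF m p t →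
    WF m n (ren g t) := by
  induction t with
  | var a =>
    intro n p g hg h
    obtain ⟨i, hi, rfl⟩ := h
    exact hg i hi
  | con a => intros; trivial
  | qcon a => intro n p g hg h; exact h
  | node f as ih => intro n p g hg h j; exact ih j (hg.lift_iter _) (h j)

theorem RenOK_iR (n : ℕ) : RenOK (n + 1) n iR := fun i hi => ⟨i + 1, by omega, rfl⟩

theorem G.lift {m n p : ℕ} {s s' : D S} (h : G m (.sb n p) s s') :
    G m (.sb (n + 1) (p + 1)) (liftS s) (liftS s') := by
  intro i hi
  cases i with
  | zero => exact ⟨by simp [liftS, ix], by simpa [liftS, ix, WF] using ⟨0, by omega, rfl⟩⟩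
  | succ i =>
    obtain ⟨e, w⟩ := h i (by omega)
    simp only [liftS, ix, cs_iR, e, true_and]
    rw [e] at w
    exact WF_ren _ (RenOK_iR n) w

theorem G.lift_iter {m n p : ℕ} {s s' : D S} (h : G m (.sb n p) s s') (k : ℕ) :
    G m (.sb (n + k) (p + k)) (liftS^[k] s) (liftS^[k] s') := by
  induction k with
  | zero => exact h
  | succ k ih => simp only [Function.iterate_succ_apply']; exact ih.lift

theorem G_sbs {m : ℕ} (t : V S) : ∀ {n p : ℕ} {s s' : D S}, G m (.sb n p) s s' → WF m p t →
    sbs s t = sbs s' t ∧ WF m n (sbs s t) := by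
  induction t with
  | var a =>
    intro n p s s' hg h
    obtain ⟨i, hi, rfl⟩ := h
    exact hg i hi
  | con a => intros; exact ⟨rfl, trivial⟩
  | qcon a => intro n p s s' hg h; exact ⟨rfl, h⟩
  | node f as ih =>
    intro n p s s' hg h
    refine ⟨?_, fun j => (ih j (hg.lift_iter _) (h j)).2⟩
    simp only [sbs]
    congr 1
    funext j
    exact (ih j (hg.lift_iter _) (h j)).1

theorem G_den {m : ℕ} {ρ : ℕ → Srt → D S} {η η' : ℕ → D S} {Θ : List Srt} {a : ETm S} {s : Srt}
    (hρ : ∀ x s, G m s (ρ x s) (ρ x s))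
    (hη : ∀ (i : ℕ) s, Θ[i]? = some s → G m s (η i) (η' i))
    (h : HasSort Θ a s) : G m s (den ρ η a) (den ρ η' a) := by
  induction h with
  | evar => exact hρ _ _
  | qvar h => exact hη _ _ h
  | @idx i n h1 h2 => exact ⟨rfl, i - 1, by omega, ix_iter _⟩
  | fa h ih =>
    refine ⟨?_, fun j => (ih j).2⟩
    simp only [den]
    congr 1
    funext j
    exact (ih j).1
  | sub h1 h2 ih1 ih2 =>
    have := G_sbs _ ih2 ih1.2
    exact ⟨by simp only [den]; rw [← ih1.1]; exact this.1, this.2⟩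
  | eid => exact fun i hi => ⟨rfl, i, hi, rfl⟩
  | cons h1 h2 ih1 ih2 =>
    intro i hi
    cases i with
    | zero => simp only [den, ix, cs_iL]; exact ih1
    | succ i => simp only [den, ix, cs_iR]; exact ih2 i (by omega)
  | up => exact fun i hi => ⟨rfl, i + 1, by omega, rfl⟩
  | comp h1 h2 ih1 ih2 =>
    intro i hi
    have := G_sbs _ ih2 (ih1 i hi).2
    exact ⟨by simp only [den]; rw [← (ih1 i hi).1]; exact this.1, this.2⟩

/- ## Readback -/

/-- `t[↑ⁿ]` in normal form for a variable `t` of sort `0`. -/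
def wk (t : ETm S) (n : ℕ) : ETm S := if n = 0 then t else .sub t (upChain S 0 n)

/-- normal form of the de Bruijn constant `i+1` in context `n` -/
def ixT (S : BSig) (i n : ℕ) : ETm S :=
  if i = 0 then .idx 1 n else .sub (.idx 1 (n - i)) (upChain S (n - i) i)

open Classical in
/-- Readback of semantic terms. -/
noncomputable def rb : ℕ → V S → ETm S
  | n, .var a => if h : ∃ i, i < n ∧ a = ix i then ixT S h.choose n else wk (.evar 0 (.tm 0)) n
  | n, .con x => wk (.evar x (.tm 0)) n
  | n, .qcon i => wk (.qvar i) n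
  | n, .node f as => .fa f n (fun j => rb (n + (S.far f).get j) (as j))

theorem rb_ix {i n : ℕ} (h : i < n) : rb n (.var (ix i) : V S) = ixT S i n := by
  have hh : ∃ j, j < n ∧ ix i = ix j := ⟨i, h, rfl⟩
  simp only [rb, dif_pos hh]
  rw [← ix_inj hh.choose_spec.2]

/-- Shapes of normal forms. -/
inductive NS : ETm S → Prop
  | ixT (i n : ℕ) : NS (ixT S i n)
  | evar (x n : ℕ) : NS (wk (.evar x (.tm 0)) n)
  | qvar (i n : ℕ) : NS (wk (.qvar i) n)
  | fa {f n} {as : Fin (S.far f).length → ETm S} : (∀ j, NS (as j)) → NS (.fa f n as)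

theorem NS_rb (t : V S) : ∀ n, NS (rb n t) := by
  induction t with
  | var a =>
    intro n
    simp only [rb]
    split
    · exact .ixT _ _
    · exact .evar _ _
  | con a => intro n; exact .evar _ _
  | qcon a => intro n; exact .qvar _ _
  | node f as ih => intro n; exact .fa fun j => ih j _

theorem upChain_normal (k : ℕ) : ∀ p, ENormal (upChain S p (k + 1)) := by
  induction k with
  | zero => intro p u h; simp only [upChain] at h; cases h
  | succ k ih =>
    intro p u h
    simp only [upChain] at h
    cases k with
    | zero =>
      simp only [upChain] at h
      rcases h with _ | _ | _ | _ | _ | _ | _ | _ | _ | _ | _ | _ | _ | _ | _ | _ | _ | h | h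
      · cases h
      · cases h
    | succ k =>
      have ih := ih (p + 1)
      simp only [upChain] at h ih
      rcases h with _ | _ | _ | _ | _ | _ | _ | _ | _ | _ | _ | _ | _ | _ | _ | _ | _ | h | h
      · cases h
      · exact ih _ h

theorem upChain_ne_eid {p k n : ℕ} : upChain S p (k + 1) ≠ .eid n := by
  cases k <;> simp [upChain]
theorem upChain_ne_cons {p k : ℕ} {t s : ETm S} : upChain S p (k + 1) ≠ .cons t s := by
  cases k <;> simp [upChain]

theorem idx1_normal (n : ℕ) : ENormal (.idx 1 n : ETm S) := by
  intro u h
  generalize e : (.idx 1 n : ETm S) = v at h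
  cases h <;> simp at e
  omega

theorem sub_normal {t : ETm S} {p k : ℕ} (ht : ENormal t)
    (h1 : ∀ a b, t ≠ .sub a b) (h2 : ∀ f p a, t ≠ .fa f p a) :
    ENormal (.sub t (upChain S p (k + 1))) := by
  intro u h
  generalize e : (ETm.sub t (upChain S p (k + 1)) : ETm S) = v at h
  cases h <;> simp only [ETm.sub.injEq, reduceCtorEq] at e
  · exact upChain_ne_cons e.2
  · exact upChain_ne_eid e.2
  · exact h1 _ _ e.1
  · exact h2 _ _ _ e.1
  · rename_i h; rw [← e.1] at h; exact ht _ h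
  · rename_i h; rw [← e.2] at h; exact upChain_normal _ _ _ h

theorem wk_normal {t : ETm S} {n : ℕ} (ht : ENormal t)
    (h1 : ∀ a b, t ≠ .sub a b) (h2 : ∀ f p a, t ≠ .fa f p a) : ENormal (wk t n) := by
  cases n with
  | zero => exact ht
  | succ n => exact sub_normal ht h1 h2

theorem NS.normal {t : ETm S} (h : NS t) : ENormal t := by
  induction h with
  | ixT i n =>
    cases i with
    | zero => exact idx1_normal n
    | succ i => exact sub_normal (idx1_normal _) (by simp) (by simp)
  | evar x n => exact wk_normal (fun u h => by cases h) (by simp) (by simp)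
  | qvar x n => exact wk_normal (fun u h => by cases h) (by simp) (by simp)
  | fa h ih =>
    intro u hu
    cases hu with
    | cfa h => exact ih _ _ h

theorem openE_upChain (u : ETm S) (i k : ℕ) : ∀ p, ETm.openE u i (upChain S p k) = upChain S p k := by
  induction k using Nat.strong_induction_on with
  | _ k ih =>
    intro p
    match k with
    | 0 => rfl
    | 1 => rfl
    | k + 2 => simp only [upChain, ETm.openE, ih (k + 1) (by omega)]

theorem NS.opn {t : ETm S} (h : NS t) (x k : ℕ) : NS (ETm.openE (.evar x (.tm 0)) k t) := by
  induction h with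
  | ixT i n =>
    have : ETm.openE (.evar x (.tm 0)) k (KeyF.ixT S i n) = KeyF.ixT S i n := by
      unfold KeyF.ixT; split <;> simp [ETm.openE, openE_upChain]
    rw [this]; exact .ixT _ _
  | evar y n =>
    have : ETm.openE (.evar x (.tm 0)) k (wk (.evar y (.tm 0)) n : ETm S) = wk (.evar y (.tm 0)) n := by
      unfold wk; split <;> simp [ETm.openE, openE_upChain]
    rw [this]; exact .evar _ _
  | qvar i n =>
    have : ETm.openE (.evar x (.tm 0)) k (wk (.qvar i) n : ETm S) =
        if i = k then wk (.evar x (.tm 0)) n else wk (.qvar i) n := by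
      unfold wk; split_ifs <;> simp [ETm.openE, openE_upChain, *]
    rw [this]
    split
    · exact .evar _ _
    · exact .qvar _ _
  | fa h ih => exact .fa ih

theorem vars0_upChain (k : ℕ) : ∀ p, (upChain S p k).vars0 := by
  induction k using Nat.strong_induction_on with
  | _ k ih =>
    intro p
    match k with
    | 0 => trivial
    | 1 => trivial
    | k + 2 => exact ⟨trivial, ih (k + 1) (by omega) _⟩

theorem NS.vars0 {t : ETm S} (h : NS t) : t.vars0 := by
  induction h with
  | ixT i n => unfold KeyF.ixT; split <;> simp [ETm.vars0, vars0_upChain]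
  | evar y n => unfold wk; split <;> simp [ETm.vars0, vars0_upChain]
  | qvar i n => unfold wk; split <;> simp [ETm.vars0, vars0_upChain]
  | fa h ih => exact ih

theorem upChain_sort (Θ : List Srt) (k : ℕ) : ∀ p, HasSort Θ (upChain S p k) (.sb (p + k) p) := by
  induction k using Nat.strong_induction_on with
  | _ k ih =>
    intro p
    match k with
    | 0 => exact .eid
    | 1 => exact .up
    | k + 2 =>
      have := ih (k + 1) (by omega) (p + 1)
      rw [show p + 1 + (k + 1) = p + (k + 2) by omega] at this
      exact .comp .up this

theorem ixT_sort (Θ : List Srt) {i n : ℕ} (h : i < n) : HasSort Θ (ixT S i n) (.tm n) := by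
  unfold ixT
  split
  · exact .idx (by omega) (by omega)
  · have := upChain_sort (S := S) Θ i (n - i)
    rw [show n - i + i = n by omega] at this
    exact .sub (.idx (by omega) (by omega)) this

theorem wk_sort (Θ : List Srt) {t : ETm S} (n : ℕ) (h : HasSort Θ t (.tm 0)) :
    HasSort Θ (wk t n) (.tm n) := by
  unfold wk
  split
  · subst_vars; exact h
  · have := upChain_sort (S := S) Θ n 0
    rw [Nat.zero_add] at this
    exact .sub h this

theorem rb_sort {m : ℕ} (t : V S) : ∀ {n : ℕ}, WF m n t →
    HasSort (List.replicate m (.tm 0)) (rb n t) (.tm n) := by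
  induction t with
  | var a =>
    intro n h
    obtain ⟨i, hi, rfl⟩ := h
    rw [rb_ix hi]; exact ixT_sort _ hi
  | con a => intro n h; exact wk_sort _ _ .evar
  | qcon i =>
    intro n h
    refine wk_sort _ _ (.qvar ?_)
    simp only [WF] at h
    simp [h]
  | node f as ih => intro n h; exact .fa fun j => ih j (h j)

/-- the canonical valuation of named variables -/
def ρ0 : ℕ → Srt → D S := fun x _ _ => .con x

theorem G_ρ0 (m : ℕ) (x : ℕ) (s : Srt) : G m s (ρ0 x s : D S) (ρ0 x s) := by
  cases s with
  | tm n => exact ⟨rfl, trivial⟩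
  | sb n p => exact fun i hi => ⟨rfl, trivial⟩

theorem den_ixT {ρ : ℕ → Srt → D S} {η : ℕ → D S} (i n : ℕ) : den ρ η (ixT S i n) 0 = .var (ix i) := by
  unfold ixT
  split
  · subst_vars; rfl
  · simp only [den, den_upChain, sbs]
    rw [← ix_iter]; rfl

theorem den_rb {η : ℕ → D S} (t : V S) : ∀ {n : ℕ}, WF 0 n t → den ρ0 η (rb n t) 0 = t := by
  induction t with
  | var a =>
    intro n h
    obtain ⟨i, hi, rfl⟩ := h
    rw [rb_ix hi, den_ixT]
  | con a => intro n h; simp only [rb, wk]; split <;> rfl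
  | qcon i => intro n h; simp [WF] at h
  | node f as ih =>
    intro n h
    simp only [rb, den]
    congr 1
    funext j
    exact ih j (h j)

end KeyF

/- ## Part 3: normalization by evaluation -/

namespace KeyF

variable {S : BSig}

theorem cv_rw {a b : ETm S} (h : Rw a b) : TmConv S a b := .rel _ _ h
theorem cv_refl (a : ETm S) : TmConv S a a := .refl _
theorem cv_symm {a b : ETm S} (h : TmConv S a b) : TmConv S b a := .symm _ _ h
theorem cv_trans {a b c : ETm S} (h : TmConv S a b) (h' : TmConv S b c) : TmConv S a c :=
  .trans _ _ _ h h'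

theorem cv_map {F : ETm S → ETm S} (hF : ∀ a b, Rw a b → Rw (F a) (F b)) {a b : ETm S}
    (h : TmConv S a b) : TmConv S (F a) (F b) := by
  induction h with
  | rel _ _ h => exact cv_rw (hF _ _ h)
  | refl => exact cv_refl _
  | symm _ _ _ ih => exact cv_symm ih
  | trans _ _ _ _ _ ih1 ih2 => exact cv_trans ih1 ih2

theorem cv_sub {a a' b b' : ETm S} (h : TmConv S a a') (h' : TmConv S b b') :
    TmConv S (.sub a b) (.sub a' b') :=
  cv_trans (cv_map (F := fun x => .sub x b) (fun _ _ h => .csub₁ h) h)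
    (cv_map (F := fun x => .sub a' x) (fun _ _ h => .csub₂ h) h')
theorem cv_cons {a a' b b' : ETm S} (h : TmConv S a a') (h' : TmConv S b b') :
    TmConv S (.cons a b) (.cons a' b') :=
  cv_trans (cv_map (F := fun x => .cons x b) (fun _ _ h => .ccons₁ h) h)
    (cv_map (F := fun x => .cons a' x) (fun _ _ h => .ccons₂ h) h')
theorem cv_comp {a a' b b' : ETm S} (h : TmConv S a a') (h' : TmConv S b b') :
    TmConv S (.comp a b) (.comp a' b') :=
  cv_trans (cv_map (F := fun x => .comp x b) (fun _ _ h => .ccomp₁ h) h)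
    (cv_map (F := fun x => .comp a' x) (fun _ _ h => .ccomp₂ h) h')

theorem cv_fa {f : S.Fn} {p : ℕ} {a b : Fin (S.far f).length → ETm S}
    (h : ∀ i, TmConv S (a i) (b i)) : TmConv S (.fa f p a) (.fa f p b) := by
  classical
  have key : ∀ s : Finset (Fin (S.far f).length),
      TmConv S (.fa f p a) (.fa f p (fun i => if i ∈ s then b i else a i)) := by
    intro s
    induction s using Finset.induction_on with
    | empty => simpa using cv_refl _
    | insert i s hi ih =>
      refine cv_trans ih ?_
      let c := fun j => if j ∈ s then b j else a j
      have := cv_map (F := fun x => .fa f p (Function.update c i x)) (fun x y hxy => by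
        have := Rw.cfa (f := f) (p := p) (a := Function.update c i x) (i := i) (t' := y) (by simpa using hxy)
        simpa using this) (h i)
      convert this using 2
      · funext j
        by_cases hj : j = i
        · subst hj; simp [hi]
        · simp [Function.update_of_ne hj, c]
      · funext j
        by_cases hj : j = i
        · subst hj; simp
        · simp [Function.update_of_ne hj, c, hj]
  simpa using key Finset.univ

theorem cv_eq {a b : ETm S} (h : a = b) : TmConv S a b := h ▸ cv_refl a

theorem upChain_succ (k : ℕ) : ∀ p,
    TmConv S (upChain S p (k + 1)) (.comp (upChain S p k) (.up (p + k))) := by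
  induction k with
  | zero => intro p; exact cv_symm (cv_rw .ridl)
  | succ k ih =>
    intro p
    have h1 : TmConv S (upChain S p (k + 2)) (.comp (.up p) (.comp (upChain S (p + 1) k) (.up (p + 1 + k)))) :=
      cv_comp (cv_refl _) (ih (p + 1))
    rw [show p + 1 + k = p + (k + 1) by omega] at h1
    refine cv_trans h1 ?_
    cases k with
    | zero => exact cv_comp (cv_refl _) (cv_rw .ridl)
    | succ k => exact cv_symm (cv_rw .rassoc)

/-- ↑^{k+1} ∘ (t.s) ≡ ↑^k ∘ s -/
theorem upChain_cons (p k : ℕ) (t s : ETm S) :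
    TmConv S (.comp (upChain S p (k + 1)) (.cons t s)) (.comp (upChain S p k) s) :=
  cv_trans (cv_comp (upChain_succ k p) (cv_refl _))
    (cv_trans (cv_rw .rassoc) (cv_comp (cv_refl _) (cv_rw .rshcons)))

theorem wk_cv (t : ETm S) (n : ℕ) : TmConv S (wk t n) (.sub t (upChain S 0 n)) := by
  cases n with
  | zero => exact cv_symm (cv_rw .rtid)
  | succ n => exact cv_refl _

theorem ixT_cv (i n : ℕ) : TmConv S (ixT S i n) (.sub (.idx 1 (n - i)) (upChain S (n - i) i)) := by
  cases i with
  | zero => exact cv_symm (cv_rw .rtid)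
  | succ n => exact cv_refl _

theorem ixT_cons (i p : ℕ) (t s : ETm S) :
    TmConv S (.sub (ixT S (i + 1) (p + 1)) (.cons t s)) (.sub (ixT S i p) s) := by
  refine cv_trans (cv_sub (ixT_cv _ _) (cv_refl _)) (cv_trans (cv_rw .rclos) ?_)
  refine cv_trans (cv_sub (cv_refl _) (upChain_cons _ _ _ _)) ?_
  refine cv_trans (cv_symm (cv_rw .rclos)) (cv_sub ?_ (cv_refl _))
  rw [show p + 1 - (i + 1) = p - i by omega]
  exact cv_symm (ixT_cv _ _)

theorem ixT_up {i n : ℕ} (h : i < n) :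
    TmConv S (.sub (ixT S i n) (.up n)) (ixT S (i + 1) (n + 1)) := by
  refine cv_trans (cv_sub (ixT_cv _ _) (cv_refl _)) (cv_trans (cv_rw .rclos) ?_)
  have h1 := cv_symm (upChain_succ (S := S) i (n - i))
  rw [show n - i + i = n by omega] at h1
  have h2 := cv_symm (ixT_cv (S := S) (i + 1) (n + 1))
  rw [show n + 1 - (i + 1) = n - i by omega] at h2
  exact cv_trans (cv_sub (cv_refl _) h1) h2

/-- Simulation of an explicit substitution by a semantic one. -/
def Sim (n p : ℕ) (s : ETm S) (σ : D S) : Prop :=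
  (∀ i, i < p → TmConv S (.sub (ixT S i p) s) (rb n (σ (ix i)))) ∧
  TmConv S (.comp (upChain S 0 p) s) (upChain S 0 n)

theorem Sim.conv {n p : ℕ} {s s' : ETm S} {σ : D S} (h : Sim n p s σ) (e : TmConv S s' s) :
    Sim n p s' σ :=
  ⟨fun i hi => cv_trans (cv_sub (cv_refl _) e) (h.1 i hi), cv_trans (cv_comp (cv_refl _) e) h.2⟩

theorem Sim.lift {n p : ℕ} {s : ETm S} {σ : D S} (h : Sim n p s σ)
    (hw : ∀ i, i < p → TmConv S (.sub (rb n (σ (ix i))) (.up n)) (rb (n + 1) (ren iR (σ (ix i))))) :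
    Sim (n + 1) (p + 1) (.cons (.idx 1 (n + 1)) (.comp s (.up n))) (liftS σ) := by
  refine ⟨fun i hi => ?_, ?_⟩
  · cases i with
    | zero =>
      refine cv_trans (cv_rw .rhead) ?_
      simp only [liftS, ix, cs_iL]
      have := rb_ix (S := S) (show 0 < n + 1 by omega)
      simp only [ix] at this
      rw [this]
      exact cv_refl _
    | succ i =>
      refine cv_trans (ixT_cons _ _ _ _) (cv_trans (cv_symm (cv_rw .rclos)) ?_)
      simp only [liftS, ix, cs_iR]
      exact cv_trans (cv_sub (h.1 i (by omega)) (cv_refl _)) (hw i (by omega))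
  · refine cv_trans (upChain_cons _ _ _ _) (cv_trans (cv_symm (cv_rw .rassoc)) ?_)
    refine cv_trans (cv_comp h.2 (cv_refl _)) ?_
    have := cv_symm (upChain_succ (S := S) n 0)
    rwa [Nat.zero_add] at this

theorem shiftOne_up {n k j : ℕ} (h : j ≤ k) :
    TmConv S (.sub (shiftOne S n k j) (.up (n + k))) (shiftOne S n (k + 1) (j + 1)) := by
  have e1 : shiftOne S n (k + 1) (j + 1) = .sub (.idx 1 (n + k - j)) (upChain S (n + k - j) (j + 1)) := by
    simp [shiftOne, show n + (k + 1) - (j + 1) = n + k - j by omega]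
  have e2 : TmConv S (shiftOne S n k j) (.sub (.idx 1 (n + k - j)) (upChain S (n + k - j) j)) := by
    cases j with
    | zero => exact cv_symm (cv_rw .rtid)
    | succ j => exact cv_refl _
  rw [e1]
  refine cv_trans (cv_sub e2 (cv_refl _)) (cv_trans (cv_rw .rclos) (cv_sub (cv_refl _) ?_))
  have := cv_symm (upChain_succ (S := S) j (n + k - j))
  rwa [show n + k - j + j = n + k by omega] at this

theorem liftAux_up (n k : ℕ) (s : ETm S) (m : ℕ) : ∀ j, m + j = k →
    TmConv S (.comp (liftAux S n k s m j) (.up (n + k))) (liftAux S n (k + 1) s m (j + 1)) := by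
  induction m with
  | zero =>
    intro j hj
    exact cv_trans (cv_rw .rassoc) (cv_comp (cv_refl _) (cv_symm (upChain_succ k n)))
  | succ m ih =>
    intro j hj
    exact cv_trans (cv_rw .rmap) (cv_cons (shiftOne_up (by omega)) (ih (j + 1) (by omega)))

theorem liftSub_succ (n k : ℕ) (s : ETm S) :
    TmConv S (liftSub S n (k + 1) s)
      (.cons (.idx 1 (n + k + 1)) (.comp (liftSub S n k s) (.up (n + k)))) := by
  have h1 : liftSub S n (k + 1) s = .cons (.idx 1 (n + k + 1)) (liftAux S n (k + 1) s k 1) := by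
    simp [liftSub, liftAux, shiftOne, Nat.add_assoc]
  rw [h1]
  refine cv_cons (cv_refl _) (cv_trans (cv_symm (liftAux_up n k s k 0 (by omega))) ?_)
  refine cv_comp ?_ (cv_refl _)
  cases k with
  | zero => exact cv_rw .ridr
  | succ k => exact cv_refl _

theorem liftAux_sort {Θ : List Srt} {n p k : ℕ} {s : ETm S} (h : HasSort Θ s (.sb n p)) (m : ℕ) :
    ∀ j, m + j = k → HasSort Θ (liftAux S n k s m j) (.sb (n + k) (p + m)) := by
  induction m with
  | zero => intro j hj; exact .comp h (upChain_sort _ _ _)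
  | succ m ih =>
    intro j hj
    refine .cons ?_ (ih (j + 1) (by omega))
    unfold shiftOne
    split
    · exact .idx (by omega) (by omega)
    · have := upChain_sort (S := S) Θ j (n + k - j)
      rw [show n + k - j + j = n + k by omega] at this
      exact .sub (.idx (by omega) (by omega)) this

theorem liftSub_sort {Θ : List Srt} {n p : ℕ} {s : ETm S} (h : HasSort Θ s (.sb n p)) (k : ℕ) :
    HasSort Θ (liftSub S n k s) (.sb (n + k) (p + k)) := by
  cases k with
  | zero => exact h
  | succ k => exact liftAux_sort h _ _ (by omega)

/-- Substitution lemma for readback, for a class `K` of substitutions closed under lifting. -/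
theorem SUB {m : ℕ} {Θ : List Srt} (K : ℕ → ℕ → D S → Prop)
    (hlift : ∀ n p σ, K n p σ → K (n + 1) (p + 1) (liftS σ))
    (hw : ∀ n p σ, K n p σ → ∀ i, i < p →
      TmConv S (.sub (rb n (σ (ix i))) (.up n)) (rb (n + 1) (ren iR (σ (ix i)))))
    (t : V S) : ∀ {n p : ℕ} {s : ETm S} {σ : D S}, HasSort Θ s (.sb n p) → K n p σ → Sim n p s σ →
      WF m p t → TmConv S (.sub (rb p t) s) (rb n (sbs σ t)) := by
  have hwk : ∀ {n p : ℕ} {s : ETm S} {σ : D S} (t : ETm S), Sim n p s σ →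
      TmConv S (.sub (wk t p) s) (wk t n) := by
    intro n p s σ t h
    refine cv_trans (cv_sub (wk_cv _ _) (cv_refl _)) (cv_trans (cv_rw .rclos) ?_)
    exact cv_trans (cv_sub (cv_refl _) h.2) (cv_symm (wk_cv _ _))
  induction t with
  | var a =>
    intro n p s σ hs hK h hwf
    obtain ⟨i, hi, rfl⟩ := hwf
    rw [rb_ix hi]
    exact h.1 i hi
  | con a => intro n p s σ hs hK h hwf; exact hwk _ h
  | qcon a => intro n p s σ hs hK h hwf; exact hwk _ h
  | node f as ih =>
    intro n p s σ hs hK h hwf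
    refine cv_trans (cv_rw (.rfa ⟨Θ, hs⟩)) ?_
    simp only [rb, sbs]
    refine cv_fa fun j => ?_
    have key : ∀ k, K (n + k) (p + k) (liftS^[k] σ) ∧
        Sim (n + k) (p + k) (liftSub S n k s) (liftS^[k] σ) := by
      intro k
      induction k with
      | zero => exact ⟨hK, h⟩
      | succ k ihk =>
        rw [Function.iterate_succ_apply']
        exact ⟨hlift _ _ _ ihk.1, (ihk.2.lift (hw _ _ _ ihk.1)).conv (liftSub_succ _ _ _)⟩
    exact ih j (liftSub_sort hs _) (key _).1 (key _).2 (hwf j)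

theorem Sim_up (n : ℕ) : Sim (n + 1) n (.up n : ETm S) (fun a => .var (iR a)) := by
  refine ⟨fun i hi => ?_, ?_⟩
  · have := rb_ix (S := S) (show i + 1 < n + 1 by omega)
    simp only [ix] at this
    rw [this]
    exact ixT_up hi
  · have := cv_symm (upChain_succ (S := S) n 0)
    rwa [Nat.zero_add] at this

theorem WKN {m : ℕ} (t : V S) {n : ℕ} (h : WF m n t) :
    TmConv S (.sub (rb n t) (.up n)) (rb (n + 1) (ren iR t)) := by
  rw [← sbs_varg]
  refine SUB (m := m) (Θ := []) (fun n p σ => ∀ i, i < p → ∃ j, j < n ∧ σ (ix i) = .var (ix j))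
    ?_ ?_ t .up ?_ (Sim_up n) h
  · intro n p σ hK i hi
    cases i with
    | zero => exact ⟨0, by omega, by simp [liftS, ix]⟩
    | succ i =>
      obtain ⟨j, hj, e⟩ := hK i (by omega)
      exact ⟨j + 1, by omega, by simp [liftS, ix, e, ren]⟩
  · intro n p σ hK i hi
    obtain ⟨j, hj, e⟩ := hK i (by omega)
    have := rb_ix (S := S) (show j + 1 < n + 1 by omega)
    simp only [ix] at this
    simp only [e, ren, this, rb_ix hj]
    exact ixT_up hj
  · exact fun i hi => ⟨i + 1, by omega, rfl⟩

theorem SUBG {m : ℕ} {Θ : List Srt} (t : V S) {n p : ℕ} {s : ETm S} {σ : D S}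
    (hs : HasSort Θ s (.sb n p)) (hG : G m (.sb n p) σ σ) (h : Sim n p s σ) (hwf : WF m p t) :
    TmConv S (.sub (rb p t) s) (rb n (sbs σ t)) :=
  SUB (m := m) (fun n p σ => G m (.sb n p) σ σ) (fun _ _ _ h => h.lift)
    (fun _ _ _ h i hi => WKN _ (h i hi).2) t hs hG h hwf

/-- the canonical valuation of quantified variables -/
def η0 : ℕ → D S := fun i _ => .qcon i

theorem G_η0 (m : ℕ) (i : ℕ) (s : Srt) (h : (List.replicate m (Srt.tm 0))[i]? = some s) :
    G m s (η0 i : D S) (η0 i) := by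
  rw [List.getElem?_replicate] at h
  split at h
  · rename_i hi
    cases h
    exact ⟨rfl, hi⟩
  · cases h

/-- simulation at a sort -/
def SimS : Srt → ETm S → D S → Prop
  | .tm n, a, d => TmConv S a (rb n (d 0))
  | .sb n p, a, d => Sim n p a d

theorem NBE {m : ℕ} {a : ETm S} {s : Srt}
    (h : HasSort (List.replicate m (.tm 0)) a s) (hv : a.vars0) : SimS s a (den ρ0 η0 a) := by
  induction h with
  | evar => cases hv; exact cv_refl _
  | qvar h =>
    rw [List.getElem?_replicate] at h
    split at h
    · cases h; exact cv_refl _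
    · cases h
  | @idx i n h1 h2 =>
    obtain ⟨i, rfl⟩ : ∃ j, i = j + 1 := ⟨i - 1, by omega⟩
    simp only [SimS, den, Nat.add_sub_cancel, ix_iter, rb_ix (show i < n by omega)]
    cases i with
    | zero => exact cv_refl _
    | succ i => exact cv_rw (.ridx (by omega) (by omega))
  | fa h ih => exact cv_fa fun j => ih j (hv j)
  | sub h1 h2 ih1 ih2 =>
    exact cv_trans (cv_sub (ih1 hv.1) (cv_refl _))
      (SUBG _ h2 (G_den (G_ρ0 m) (G_η0 m) h2) (ih2 hv.2) (G_den (G_ρ0 m) (G_η0 m) h1).2)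
  | @eid n =>
    refine ⟨fun i hi => ?_, cv_rw .ridr⟩
    simp only [den, rb_ix hi]
    exact cv_rw .rtid
  | cons h1 h2 ih1 ih2 =>
    have ih1 := ih1 hv.1
    have ih2 := ih2 hv.2
    refine ⟨fun i hi => ?_, cv_trans (upChain_cons _ _ _ _) ih2.2⟩
    cases i with
    | zero => simp only [den, ix, cs_iL]; exact cv_trans (cv_rw .rhead) ih1
    | succ i =>
      simp only [den, ix, cs_iR]
      exact cv_trans (ixT_cons _ _ _ _) (ih2.1 i (by omega))
  | up => exact Sim_up _
  | comp h1 h2 ih1 ih2 =>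
    have ih1 := ih1 hv.1
    have ih2 := ih2 hv.2
    refine ⟨fun i hi => ?_, ?_⟩
    · refine cv_trans (cv_symm (cv_rw .rclos)) (cv_trans (cv_sub (ih1.1 i hi) (cv_refl _)) ?_)
      exact SUBG _ h2 (G_den (G_ρ0 m) (G_η0 m) h2) ih2 ((G_den (G_ρ0 m) (G_η0 m) h1) i hi).2
    · exact cv_trans (cv_symm (cv_rw .rassoc)) (cv_trans (cv_comp ih1.2 (cv_refl _)) ih2.2)

end KeyF

/- ## Part 4: syntax of propositions -/

namespace KeyF

variable {S : BSig}

theorem fc_refl (A : EFm S) : FConv A A := by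
  induction A with
  | atom P a => exact .atom fun i => cv_refl _
  | imp A B h1 h2 => exact .imp h1 h2
  | conj A B h1 h2 => exact .conj h1 h2
  | disj A B h1 h2 => exact .disj h1 h2
  | bot => exact .bot
  | all s A h => exact .all h
  | ex s A h => exact .ex h

theorem fc_symm {A B : EFm S} (h : FConv A B) : FConv B A := by
  induction h with
  | atom h => exact .atom fun i => cv_symm (h i)
  | imp _ _ h1 h2 => exact .imp h1 h2
  | conj _ _ h1 h2 => exact .conj h1 h2
  | disj _ _ h1 h2 => exact .disj h1 h2
  | bot => exact .bot
  | all _ h => exact .all h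
  | ex _ h => exact .ex h

/-- Normal form of a proposition. -/
noncomputable def nf : EFm S → EFm S
  | .atom P a => .atom P (fun i => rb ((S.par P).get i) (den ρ0 η0 (a i) 0))
  | .imp A B => .imp (nf A) (nf B)
  | .conj A B => .conj (nf A) (nf B)
  | .disj A B => .disj (nf A) (nf B)
  | .bot => .bot
  | .all s A => .all s (nf A)
  | .ex s A => .ex s (nf A)

theorem nf_conv (A : EFm S) : ∀ {m : ℕ}, EFmSorted (List.replicate m (.tm 0)) A → A.vars0F →
    FConv A (nf A) := by
  induction A with
  | atom P a => intro m h hv; exact .atom fun i => NBE (h i) (hv i)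
  | imp A B h1 h2 => intro m h hv; exact .imp (h1 h.1 hv.1) (h2 h.2 hv.2)
  | conj A B h1 h2 => intro m h hv; exact .conj (h1 h.1 hv.1) (h2 h.2 hv.2)
  | disj A B h1 h2 => intro m h hv; exact .disj (h1 h.1 hv.1) (h2 h.2 hv.2)
  | bot => intros; exact .bot
  | all s A ih =>
    intro m h hv
    obtain ⟨rfl, hv⟩ := hv
    exact .all (ih (m := m + 1) h hv)
  | ex s A ih =>
    intro m h hv
    obtain ⟨rfl, hv⟩ := hv
    exact .ex (ih (m := m + 1) h hv)

theorem nf_sorted (A : EFm S) : ∀ {m : ℕ}, EFmSorted (List.replicate m (.tm 0)) A → A.vars0F →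
    EFmSorted (List.replicate m (.tm 0)) (nf A) := by
  induction A with
  | atom P a => intro m h hv i; exact rb_sort _ (G_den (G_ρ0 m) (G_η0 m) (h i)).2
  | imp A B h1 h2 => intro m h hv; exact ⟨h1 h.1 hv.1, h2 h.2 hv.2⟩
  | conj A B h1 h2 => intro m h hv; exact ⟨h1 h.1 hv.1, h2 h.2 hv.2⟩
  | disj A B h1 h2 => intro m h hv; exact ⟨h1 h.1 hv.1, h2 h.2 hv.2⟩
  | bot => intros; trivial
  | all s A ih =>
    intro m h hv
    obtain ⟨rfl, hv⟩ := hv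
    exact ih (m := m + 1) h hv
  | ex s A ih =>
    intro m h hv
    obtain ⟨rfl, hv⟩ := hv
    exact ih (m := m + 1) h hv

theorem nf_vars (A : EFm S) : A.vars0F → (nf A).vars0F := by
  induction A with
  | atom P a => intro hv i; exact (NS_rb _ _).vars0
  | imp A B h1 h2 => exact fun hv => ⟨h1 hv.1, h2 hv.2⟩
  | conj A B h1 h2 => exact fun hv => ⟨h1 hv.1, h2 hv.2⟩
  | disj A B h1 h2 => exact fun hv => ⟨h1 hv.1, h2 hv.2⟩
  | bot => intros; trivial
  | all s A ih => exact fun hv => ⟨hv.1, ih hv.2⟩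
  | ex s A ih => exact fun hv => ⟨hv.1, ih hv.2⟩

theorem nf_normal (A : EFm S) : (nf A).TmsNormal := by
  induction A with
  | atom P a => exact fun i => (NS_rb _ _).normal
  | imp A B h1 h2 => exact ⟨h1, h2⟩
  | conj A B h1 h2 => exact ⟨h1, h2⟩
  | disj A B h1 h2 => exact ⟨h1, h2⟩
  | bot => trivial
  | all s A ih => exact ih
  | ex s A ih => exact ih

theorem nf_open_normal (x : ℕ) (A : EFm S) : ∀ k,
    (EFm.openF (.evar x (.tm 0)) k (nf A)).TmsNormal := by
  induction A with
  | atom P a => exact fun k i => ((NS_rb _ _).opn x k).normal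
  | imp A B h1 h2 => exact fun k => ⟨h1 k, h2 k⟩
  | conj A B h1 h2 => exact fun k => ⟨h1 k, h2 k⟩
  | disj A B h1 h2 => exact fun k => ⟨h1 k, h2 k⟩
  | bot => exact fun k => trivial
  | all s A ih => exact fun k => ih (k + 1)
  | ex s A ih => exact fun k => ih (k + 1)

theorem openE_vars {u : ETm S} (hu : u.vars0) (k : ℕ) (a : ETm S) (h : a.vars0) :
    (ETm.openE u k a).vars0 := by
  induction a with
  | evar x s => exact h
  | qvar i => simp only [ETm.openE]; split <;> first | exact hu | trivial
  | idx i n => trivial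
  | fa f p a ih => exact fun i => ih i (h i)
  | sub t s h1 h2 => exact ⟨h1 h.1, h2 h.2⟩
  | eid n => trivial
  | cons t s h1 h2 => exact ⟨h1 h.1, h2 h.2⟩
  | up n => trivial
  | comp t s h1 h2 => exact ⟨h1 h.1, h2 h.2⟩

theorem openF_vars {u : ETm S} (hu : u.vars0) (A : EFm S) : ∀ k, A.vars0F →
    (EFm.openF u k A).vars0F := by
  induction A with
  | atom P a => exact fun k h i => openE_vars hu k _ (h i)
  | imp A B h1 h2 => exact fun k hv => ⟨h1 k hv.1, h2 k hv.2⟩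
  | conj A B h1 h2 => exact fun k hv => ⟨h1 k hv.1, h2 k hv.2⟩
  | disj A B h1 h2 => exact fun k hv => ⟨h1 k hv.1, h2 k hv.2⟩
  | bot => exact fun k _ => trivial
  | all s A ih => exact fun k hv => ⟨hv.1, ih (k + 1) hv.2⟩
  | ex s A ih => exact fun k hv => ⟨hv.1, ih (k + 1) hv.2⟩

theorem sort_weak {u : ETm S} {s : Srt} {Θ' : List Srt} (h : HasSort Θ' u s) (e : Θ' = []) (Θ : List Srt) :
    HasSort Θ u s := by
  induction h with
  | evar => exact .evar
  | qvar h => subst e; simp at h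
  | idx h1 h2 => exact .idx h1 h2
  | fa h ih => exact .fa fun j => ih j
  | sub h1 h2 ih1 ih2 => exact .sub ih1 ih2
  | eid => exact .eid
  | cons h1 h2 ih1 ih2 => exact .cons ih1 ih2
  | up => exact .up
  | comp h1 h2 ih1 ih2 => exact .comp ih1 ih2

theorem openE_sort {u : ETm S} {s0 : Srt} (hu : HasSort [] u s0) (Θ : List Srt) {Θ' : List Srt}
    {a : ETm S} {s : Srt} (h : HasSort Θ' a s) (e : Θ' = Θ ++ [s0]) :
    HasSort Θ (ETm.openE u Θ.length a) s := by
  induction h with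
  | evar => exact .evar
  | @qvar i s h =>
    subst e
    simp only [ETm.openE]
    split
    · subst_vars
      simp at h
      subst h
      exact sort_weak hu rfl Θ
    · rename_i hne
      refine .qvar ?_
      rw [List.getElem?_append] at h
      split at h
      · exact h
      · rename_i h2
        rw [List.getElem?_eq_none] at h
        · cases h
        · simp; omega
  | idx h1 h2 => exact .idx h1 h2
  | fa h ih => exact .fa fun j => ih j
  | sub h1 h2 ih1 ih2 => exact .sub ih1 ih2
  | eid => exact .eid
  | cons h1 h2 ih1 ih2 => exact .cons ih1 ih2
  | up => exact .up
  | comp h1 h2 ih1 ih2 => exact .comp ih1 ih2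

theorem openF_sort {u : ETm S} {s0 : Srt} (hu : HasSort [] u s0) (A : EFm S) : ∀ (Θ : List Srt),
    EFmSorted (Θ ++ [s0]) A → EFmSorted Θ (EFm.openF u Θ.length A) := by
  induction A with
  | atom P a => exact fun Θ h i => openE_sort hu Θ (h i) rfl
  | imp A B h1 h2 => exact fun Θ h => ⟨h1 Θ h.1, h2 Θ h.2⟩
  | conj A B h1 h2 => exact fun Θ h => ⟨h1 Θ h.1, h2 Θ h.2⟩
  | disj A B h1 h2 => exact fun Θ h => ⟨h1 Θ h.1, h2 Θ h.2⟩
  | bot => exact fun Θ _ => trivial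
  | all s A ih => exact fun Θ h => ih (s :: Θ) h
  | ex s A ih => exact fun Θ h => ih (s :: Θ) h

/-- number of connectives -/
def sz : EFm S → ℕ
  | .atom _ _ => 0
  | .imp A B => sz A + sz B + 1
  | .conj A B => sz A + sz B + 1
  | .disj A B => sz A + sz B + 1
  | .bot => 0
  | .all _ A => sz A + 1
  | .ex _ A => sz A + 1

theorem sz_nf (A : EFm S) : sz (nf A) = sz A := by
  induction A <;> simp_all [sz, nf]

theorem sz_open (u : ETm S) (A : EFm S) : ∀ k, sz (EFm.openF u k A) = sz A := by
  induction A <;> simp_all [sz, EFm.openF]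

theorem fvs_fin (a : ETm S) : a.fvs.Finite := by
  induction a with
  | fa f p a ih => exact Set.finite_iUnion ih
  | _ => simp_all [ETm.fvs]

theorem fvsF_fin (A : EFm S) : A.fvs.Finite := by
  induction A with
  | atom P a => exact Set.finite_iUnion fun i => fvs_fin _
  | _ => simp_all [EFm.fvs]

theorem mfvs_fin (Γ : Multiset (EFm S)) : (mFvE Γ).Finite := by
  induction Γ using Multiset.induction_on with
  | empty => simp [mFvE]
  | cons A Γ ih =>
    refine (Set.Finite.union (fvsF_fin A) ih).subset ?_
    rintro x ⟨B, hB, hx⟩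
    rcases Multiset.mem_cons.1 hB with rfl | hB
    · exact .inl hx
    · exact .inr ⟨B, hB, hx⟩

theorem exists_fresh (Γ Δ : Multiset (EFm S)) (A : EFm S) :
    ∃ x, x ∉ mFvE Γ ∧ x ∉ mFvE Δ ∧ x ∉ A.fvs := by
  obtain ⟨x, hx⟩ := (((mfvs_fin Γ).union (mfvs_fin Δ)).union (fvsF_fin A)).exists_notMem
  simp only [Set.mem_union, not_or] at hx
  exact ⟨x, hx.1.1, hx.1.2, hx.2⟩

/- ### denotations and quantifier variables -/

theorem den_open (ρ : ℕ → Srt → D S) (η : ℕ → D S) (u : ETm S) (k : ℕ) (a : ETm S) :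
    den ρ η (ETm.openE u k a) = den ρ (Function.update η k (den ρ η u)) a := by
  induction a with
  | qvar i =>
    simp only [ETm.openE, den, Function.update_apply]
    split <;> rfl
  | _ => simp_all [ETm.openE, den]

theorem den_closed {ρ : ℕ → Srt → D S} (η η' : ℕ → D S) {a : ETm S} {s : Srt} {Θ : List Srt}
    (h : HasSort Θ a s) (e : Θ = []) :
    den ρ η a = den ρ η' a := by
  induction h with
  | qvar h => subst e; simp at h
  | _ => simp_all [den]

theorem den_fresh {ρ : ℕ → Srt → D S} (η : ℕ → D S) {x : ℕ} {s : Srt} {d : D S} (a : ETm S)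
    (h : x ∉ a.fvs) :
    den (Function.update ρ x (Function.update (ρ x) s d)) η a = den ρ η a := by
  induction a with
  | evar y s' =>
    have : y ≠ x := fun e => h (by simp [ETm.fvs, e])
    simp [den, Function.update_of_ne this]
  | fa f p a ih =>
    have : ∀ i, x ∉ (a i).fvs := fun i hi => h (Set.mem_iUnion.2 ⟨i, hi⟩)
    simp only [den]
    funext _
    congr 1
    funext i
    rw [ih i (this i)]
  | _ => simp_all [den, ETm.fvs]

end KeyF

/- ## Part 5: conditions and forcing -/

namespace KeyF

variable {S : BSig}

/-- F-propositions -/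
abbrev FP (S : BSig) := {A : EFm S // FProp A}

/-- conditions: sequents of F-propositions -/
abbrev Cond (S : BSig) := Multiset (FP S) × Multiset (FP S)

/-- antecedent -/
def lf (p : Cond S) : Multiset (EFm S) := p.1.map Subtype.val
/-- succedent -/
def rt (p : Cond S) : Multiset (EFm S) := p.2.map Subtype.val

/-- provability by F-proofs -/
def Pv (p : Cond S) : Prop := DerivR FConv FProp FTerm0 (lf p) (rt p)

/-- one proposition on the left -/
def L (A : FP S) : Cond S := ({A}, 0)
/-- one proposition on the right -/
def R (A : FP S) : Cond S := (0, {A})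

theorem lf_TF (p : Cond S) : AllTF FProp (lf p) := by
  intro X hX
  obtain ⟨Y, _, rfl⟩ := Multiset.mem_map.1 hX
  exact Y.2
theorem rt_TF (p : Cond S) : AllTF FProp (rt p) := by
  intro X hX
  obtain ⟨Y, _, rfl⟩ := Multiset.mem_map.1 hX
  exact Y.2

theorem lf_L (A : FP S) (p : Cond S) : lf (L A + p) = A.1 ::ₘ lf p := by
  simp [lf, L]
theorem rt_L (A : FP S) (p : Cond S) : rt (L A + p) = rt p := by
  simp [rt, L]
theorem lf_R (A : FP S) (p : Cond S) : lf (R A + p) = lf p := by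
  simp [lf, R]
theorem rt_R (A : FP S) (p : Cond S) : rt (R A + p) = A.1 ::ₘ rt p := by
  simp [rt, R]

theorem Pv_L {A : FP S} {p : Cond S} :
    Pv (L A + p) ↔ DerivR FConv FProp FTerm0 (A.1 ::ₘ lf p) (rt p) := by
  rw [Pv, lf_L, rt_L]
theorem Pv_R {A : FP S} {p : Cond S} :
    Pv (R A + p) ↔ DerivR FConv FProp FTerm0 (lf p) (A.1 ::ₘ rt p) := by
  rw [Pv, lf_R, rt_R]

theorem TFc {A : FP S} {Γ : Multiset (EFm S)} (h : AllTF FProp Γ) : AllTF FProp (A.1 ::ₘ Γ) := by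
  intro X hX
  rcases Multiset.mem_cons.1 hX with rfl | hX
  · exact A.2
  · exact h _ hX

theorem cond_induction {P : Cond S → Prop} (h0 : P 0) (hL : ∀ A p, P p → P (L A + p))
    (hR : ∀ A p, P p → P (R A + p)) (p : Cond S) : P p := by
  obtain ⟨a, b⟩ := p
  induction a using Multiset.induction_on with
  | empty =>
    induction b using Multiset.induction_on with
    | empty => exact h0
    | cons A b ih =>
      have := hR A _ ih
      simpa [R] using this
  | cons A a ih =>
    have := hL A _ ih
    simpa [L] using this

theorem weak {p : Cond S} (h : Pv p) (q : Cond S) : Pv (p + q) := by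
  induction q using cond_induction with
  | h0 => simpa using h
  | hL A q ih =>
    rw [show p + (L A + q) = L A + (p + q) by abel]
    exact Pv_L.2 (.weakL (TFc (lf_TF _)) (rt_TF _) ih)
  | hR A q ih =>
    rw [show p + (R A + q) = R A + (p + q) by abel]
    exact Pv_R.2 (.weakR (lf_TF _) (TFc (rt_TF _)) ih)

theorem cL {A : FP S} {p : Cond S} (h : Pv (L A + (L A + p))) : Pv (L A + p) := by
  rw [Pv, lf_L, lf_L, rt_L, rt_L] at h
  exact Pv_L.2 (.contrL (TFc (lf_TF _)) (rt_TF _) A.2 A.2 (fc_refl _) (fc_refl _) h)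
theorem cR {A : FP S} {p : Cond S} (h : Pv (R A + (R A + p))) : Pv (R A + p) := by
  rw [Pv, lf_R, lf_R, rt_R, rt_R] at h
  exact Pv_R.2 (.contrR (lf_TF _) (TFc (rt_TF _)) A.2 A.2 (fc_refl _) (fc_refl _) h)

theorem contr (p : Cond S) : ∀ q, Pv (p + p + q) → Pv (p + q) := by
  induction p using cond_induction with
  | h0 => intro q h; simpa using h
  | hL A p ih =>
    intro q h
    rw [show L A + p + q = L A + (p + q) by abel]
    refine cL ?_
    rw [show L A + (L A + (p + q)) = p + (L A + L A + q) by abel]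
    refine ih _ ?_
    convert h using 1
    abel
  | hR A p ih =>
    intro q h
    rw [show R A + p + q = R A + (p + q) by abel]
    refine cR ?_
    rw [show R A + (R A + (p + q)) = p + (R A + R A + q) by abel]
    refine ih _ ?_
    convert h using 1
    abel

theorem contr0 {p : Cond S} (h : Pv (p + p)) : Pv p := by
  have := contr p 0 (by simpa using h)
  simpa using this

theorem axm {A B : FP S} (h : FConv A.1 B.1) : Pv (L A + R B) := by
  have : Pv (L A + R B) ↔ DerivR FConv FProp FTerm0 {A.1} {B.1} := by
    simp [Pv, L, R, lf, rt]
  exact this.2 (.ax A.2 B.2 h)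

theorem ax (A : FP S) (p : Cond S) : Pv (L A + (R A + p)) := by
  rw [← add_assoc]
  exact weak (axm (fc_refl _)) p

theorem cutm {A : FP S} {p q : Cond S} (h1 : Pv (L A + q)) (h2 : Pv (R A + p)) : Pv (p + q) := by
  refine .cut (A := A.1) (B := A.1) (lf_TF _) (rt_TF _) A.2 A.2 (fc_refl _) (Pv_L.1 ?_) (Pv_R.1 ?_)
  · rw [show L A + (p + q) = L A + q + p by abel]
    exact weak h1 p
  · rw [show R A + (p + q) = R A + p + q by abel]
    exact weak h2 q

theorem convR {A B : FP S} {p : Cond S} (h : FConv A.1 B.1) (h2 : Pv (R A + p)) : Pv (R B + p) := by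
  rw [add_comm]
  exact cutm (axm h) h2

theorem impL {A B C : FP S} {p : Cond S} (e : C.1 = .imp A.1 B.1) (h1 : Pv (R A + p))
    (h2 : Pv (L B + p)) : Pv (L C + p) :=
  Pv_L.2 (.impL (TFc (lf_TF _)) (rt_TF _) A.2 B.2 (e ▸ fc_refl _) (Pv_R.1 h1) (Pv_L.1 h2))

theorem impR {A B C : FP S} {p : Cond S} (e : C.1 = .imp A.1 B.1) (h : Pv (L A + (R B + p))) :
    Pv (R C + p) := by
  rw [Pv_L, lf_R, rt_R] at h
  exact Pv_R.2 (.impR (lf_TF _) (TFc (rt_TF _)) A.2 B.2 (e ▸ fc_refl _) h)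

theorem conjL {A B C : FP S} {p : Cond S} (e : C.1 = .conj A.1 B.1) (h : Pv (L A + (L B + p))) :
    Pv (L C + p) := by
  rw [Pv_L, lf_L, rt_L] at h
  exact Pv_L.2 (.conjL (TFc (lf_TF _)) (rt_TF _) A.2 B.2 (e ▸ fc_refl _) h)

theorem conjR {A B C : FP S} {p : Cond S} (e : C.1 = .conj A.1 B.1) (h1 : Pv (R A + p))
    (h2 : Pv (R B + p)) : Pv (R C + p) :=
  Pv_R.2 (.conjR (lf_TF _) (TFc (rt_TF _)) A.2 B.2 (e ▸ fc_refl _) (Pv_R.1 h1) (Pv_R.1 h2))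

theorem disjL {A B C : FP S} {p : Cond S} (e : C.1 = .disj A.1 B.1) (h1 : Pv (L A + p))
    (h2 : Pv (L B + p)) : Pv (L C + p) :=
  Pv_L.2 (.disjL (TFc (lf_TF _)) (rt_TF _) A.2 B.2 (e ▸ fc_refl _) (Pv_L.1 h1) (Pv_L.1 h2))

theorem disjR {A B C : FP S} {p : Cond S} (e : C.1 = .disj A.1 B.1) (h : Pv (R A + (R B + p))) :
    Pv (R C + p) := by
  rw [Pv_R, lf_R, rt_R] at h
  exact Pv_R.2 (.disjR (lf_TF _) (TFc (rt_TF _)) A.2 B.2 (e ▸ fc_refl _) h)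

theorem botL {C : FP S} {p : Cond S} (e : C.1 = .bot) : Pv (L C + p) :=
  Pv_L.2 (.botL (TFc (lf_TF _)) (rt_TF _) (e ▸ fc_refl _))

theorem allL {A : EFm S} {B C : FP S} {t : ETm S} {p : Cond S} (e : B.1 = .all (.tm 0) A)
    (ht : FTerm0 t) (hC : FConv C.1 (EFm.openF t 0 A)) (h : Pv (L C + p)) : Pv (L B + p) :=
  Pv_L.2 (.allL (TFc (lf_TF _)) (rt_TF _) C.2 ht (e ▸ fc_refl _) hC ht.2.2 (Pv_L.1 h))

theorem exR {A : EFm S} {B C : FP S} {t : ETm S} {p : Cond S} (e : B.1 = .ex (.tm 0) A)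
    (ht : FTerm0 t) (hC : FConv C.1 (EFm.openF t 0 A)) (h : Pv (R C + p)) : Pv (R B + p) :=
  Pv_R.2 (.exR (lf_TF _) (TFc (rt_TF _)) C.2 ht (e ▸ fc_refl _) hC ht.2.2 (Pv_R.1 h))

theorem allR {A : EFm S} {B C : FP S} {x : ℕ} {p : Cond S} (e : FConv B.1 (.all (.tm 0) A))
    (hC : C.1 = EFm.openF (.evar x (.tm 0)) 0 A) (h1 : x ∉ mFvE (lf p)) (h2 : x ∉ mFvE (rt p))
    (h3 : x ∉ A.fvs) (h : Pv (R C + p)) : Pv (R B + p) := by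
  have hC2 := C.2
  rw [Pv_R, hC] at h
  rw [hC] at hC2
  exact Pv_R.2 (.allR (lf_TF _) (TFc (rt_TF _)) hC2 e h1 h2 h3 h)

theorem exL {A : EFm S} {B C : FP S} {x : ℕ} {p : Cond S} (e : FConv B.1 (.ex (.tm 0) A))
    (hC : C.1 = EFm.openF (.evar x (.tm 0)) 0 A) (h1 : x ∉ mFvE (lf p)) (h2 : x ∉ mFvE (rt p))
    (h3 : x ∉ A.fvs) (h : Pv (L C + p)) : Pv (L B + p) := by
  have hC2 := C.2
  rw [Pv_L, hC] at h
  rw [hC] at hC2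
  exact Pv_L.2 (.exL (TFc (lf_TF _)) (rt_TF _) hC2 e h1 h2 h3 h)

/- ### Forcing -/

/-- orthogonal of a set of conditions -/
def ng (X : Cond S → Prop) (q : Cond S) : Prop := ∀ r, X r → Pv (r + q)

/-- biorthogonally closed sets -/
def Stable (X : Cond S → Prop) : Prop := ∀ p, (∀ q, ng X q → Pv (p + q)) → X p

theorem ng_mono {X : Cond S → Prop} {q : Cond S} (h : ng X q) (q' : Cond S) : ng X (q + q') := by
  intro r hr
  rw [← add_assoc]
  exact weak (h r hr) _

theorem Stable.mono {X : Cond S → Prop} (hX : Stable X) {p : Cond S} (h : X p) (p' : Cond S) :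
    X (p + p') := by
  refine hX _ fun q hq => ?_
  rw [show p + p' + q = p + q + p' by abel]
  exact weak (hq p h) _

theorem app {X : Cond S → Prop} {p : Cond S} (h : X p) (h' : ng X p) : Pv p := contr0 (h' p h)

open Classical in
/-- force a proposition to be an F-proposition -/
noncomputable def mk (A : EFm S) : FP S := if h : FProp A then ⟨A, h⟩ else ⟨.bot, trivial, trivial, trivial⟩

theorem mk_eq {A : EFm S} (h : FProp A) : mk A = ⟨A, h⟩ := by simp [mk, h]

/-- extend a valuation of quantified variables -/
def push (d : D S) (η : ℕ → D S) : ℕ → D S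
  | 0 => d
  | i + 1 => η i

/-- forcing -/
def Force (ρ : ℕ → Srt → D S) : (ℕ → D S) → EFm S → Cond S → Prop
  | η, .atom P a => fun p =>
      Pv (p + R (mk (.atom P (fun i => rb ((S.par P).get i) (den ρ η (a i) 0)))))
  | η, .imp A B => fun p => ∀ q, Force ρ η A q → Force ρ η B (p + q)
  | η, .conj A B => fun p => Force ρ η A p ∧ Force ρ η B p
  | η, .disj A B => fun p => ∀ q, ng (Force ρ η A) q → ng (Force ρ η B) q → Pv (p + q)
  | _, .bot => fun p => Pv p
  | η, .all s A => fun p => ∀ d, G 0 s d d → Force ρ (push d η) A p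
  | η, .ex s A => fun p => ∀ q, (∀ d, G 0 s d d → ng (Force ρ (push d η) A) q) → Pv (p + q)

variable {ρ : ℕ → Srt → D S}

theorem stable (A : EFm S) : ∀ η, Stable (Force ρ η A) := by
  induction A with
  | atom P a => exact fun η p h => h _ fun r hr => hr
  | imp A B h1 h2 =>
    intro η p h q hq
    refine h2 η _ fun r hr => ?_
    rw [add_assoc]
    refine h _ fun r' hr' => ?_
    rw [← add_assoc]
    exact hr _ (hr' q hq)
  | conj A B h1 h2 =>
    intro η p h
    exact ⟨h1 η _ fun q hq => h q fun r hr => hq _ hr.1, h2 η _ fun q hq => h q fun r hr => hq _ hr.2⟩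
  | disj A B h1 h2 =>
    intro η p h q h1 h2
    exact h q fun r hr => hr q h1 h2
  | bot =>
    intro η p h
    have := h 0 (fun r hr => by simpa [Force] using hr)
    simpa [Force] using this
  | all s A ih =>
    intro η p h d hd
    exact ih _ _ fun q hq => h q fun r hr => hq _ (hr d hd)
  | ex s A ih =>
    intro η p h q hq
    exact h q fun r hr => hr q hq

theorem force_conv {A B : EFm S} (h : FConv A B) : ∀ η, Force ρ η A = Force ρ η B := by
  induction h with
  | atom h => intro η; simp only [Force, den_conv (h _)]
  | imp _ _ h1 h2 => intro η; simp only [Force, h1, h2]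
  | conj _ _ h1 h2 => intro η; simp only [Force, h1, h2]
  | disj _ _ h1 h2 => intro η; simp only [Force, h1, h2]
  | bot => intro η; rfl
  | all _ h => intro η; simp only [Force, h]
  | ex _ h => intro η; simp only [Force, h]

theorem push_update (d : D S) (η : ℕ → D S) (k : ℕ) (U : D S) :
    push d (Function.update η k U) = Function.update (push d η) (k + 1) U := by
  funext i
  cases i with
  | zero => simp [push]
  | succ i => simp [push, Function.update_apply]

theorem force_open {u : ETm S} {U : D S} (hu : ∀ η, den ρ η u = U) (A : EFm S) : ∀ η k,
    Force ρ η (EFm.openF u k A) = Force ρ (Function.update η k U) A := by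
  induction A with
  | atom P a => intro η k; simp only [EFm.openF, Force, den_open, hu]
  | imp A B h1 h2 => intro η k; simp only [EFm.openF, Force, h1, h2]
  | conj A B h1 h2 => intro η k; simp only [EFm.openF, Force, h1, h2]
  | disj A B h1 h2 => intro η k; simp only [EFm.openF, Force, h1, h2]
  | bot => intro η k; rfl
  | all s A h => intro η k; simp only [EFm.openF, Force, h, push_update]
  | ex s A h => intro η k; simp only [EFm.openF, Force, h, push_update]

theorem force_fresh {x : ℕ} {s : Srt} {d : D S} (A : EFm S) (hx : x ∉ A.fvs) : ∀ η,
    Force (Function.update ρ x (Function.update (ρ x) s d)) η A = Force ρ η A := by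
  induction A with
  | atom P a =>
    have : ∀ i, x ∉ (a i).fvs := fun i hi => hx (Set.mem_iUnion.2 ⟨i, hi⟩)
    intro η; simp only [Force, den_fresh _ _ (this _)]
  | bot => intro η; rfl
  | _ => simp_all [Force, EFm.fvs]

theorem force_rel (hρ : ∀ x s, G 0 s (ρ x s) (ρ x s)) (A : EFm S) : ∀ Θ, EFmSorted Θ A →
    ∀ η η' : ℕ → D S, (∀ (i : ℕ) s, Θ[i]? = some s → G 0 s (η i) (η' i)) →
    Force ρ η A = Force ρ η' A := by
  induction A with
  | atom P a =>
    intro Θ h η η' hη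
    have : ∀ i, den ρ η (a i) 0 = den ρ η' (a i) 0 := fun i => (G_den hρ hη (h i)).1
    simp only [Force, this]
  | imp A B h1 h2 => intro Θ h η η' hη; simp only [Force, h1 Θ h.1 η η' hη, h2 Θ h.2 η η' hη]
  | conj A B h1 h2 => intro Θ h η η' hη; simp only [Force, h1 Θ h.1 η η' hη, h2 Θ h.2 η η' hη]
  | disj A B h1 h2 => intro Θ h η η' hη; simp only [Force, h1 Θ h.1 η η' hη, h2 Θ h.2 η η' hη]
  | bot => intros; rfl
  | all s A ih =>
    intro Θ h η η' hη
    have : ∀ d, G 0 s d d → Force ρ (push d η) A = Force ρ (push d η') A := by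
      intro d hd
      refine ih (s :: Θ) h _ _ fun i s' hs => ?_
      cases i with
      | zero => simp at hs; subst hs; exact hd
      | succ i => exact hη i s' (by simpa using hs)
    funext p
    simp only [Force]
    exact propext (forall₂_congr fun d hd => by rw [this d hd])
  | ex s A ih =>
    intro Θ h η η' hη
    have : ∀ d, G 0 s d d → Force ρ (push d η) A = Force ρ (push d η') A := by
      intro d hd
      refine ih (s :: Θ) h _ _ fun i s' hs => ?_
      cases i with
      | zero => simp at hs; subst hs; exact hd
      | succ i => exact hη i s' (by simpa using hs)
    funext p
    simp only [Force]
    exact propext (forall_congr' fun q => imp_congr_left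
      (forall₂_congr fun d hd => by rw [this d hd]))

end KeyF

/- ## Part 6: soundness and completeness of forcing -/

namespace KeyF

variable {S : BSig}

/-- a constant valuation of the quantified variables -/
def cc : ℕ → D S := fun _ _ => .con 0

theorem push_cc (d : D S) : push d cc = Function.update cc 0 d := by
  funext i
  cases i with
  | zero => simp [push]
  | succ i => simp only [push, Function.update_of_ne (Nat.succ_ne_zero i)]; rfl

theorem G_update {ρ : ℕ → Srt → D S} (hρ : ∀ x s, G 0 s (ρ x s) (ρ x s)) (x : ℕ) (s : Srt) (d : D S)
    (hd : G 0 s d d) : ∀ x' s', G 0 s' (Function.update ρ x (Function.update (ρ x) s d) x' s')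
      (Function.update ρ x (Function.update (ρ x) s d) x' s') := by
  intro x' s'
  by_cases h : x' = x
  · subst h
    by_cases h' : s' = s
    · subst h'; simpa using hd
    · simpa [Function.update_of_ne h'] using hρ _ _
  · simpa [Function.update_of_ne h] using hρ _ _

theorem force_inst {ρ : ℕ → Srt → D S} {t : ETm S} {s : Srt} (ht : HasSort [] t s) (A : EFm S) :
    Force ρ cc (EFm.openF t 0 A) = Force ρ (push (den ρ cc t) cc) A := by
  rw [push_cc]
  exact force_open (fun η => den_closed η cc ht rfl) A _ _

theorem force_eigen {ρ : ℕ → Srt → D S} {x : ℕ} {s : Srt} (d : D S) (A : EFm S) (hx : x ∉ A.fvs) :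
    Force (Function.update ρ x (Function.update (ρ x) s d)) cc (EFm.openF (.evar x s) 0 A) =
      Force ρ (push d cc) A := by
  rw [force_inst .evar, force_fresh A hx]
  simp [den]

theorem soundness {n : ℕ} {Γ Δ : Multiset (EFm S)} (h : DerivM FConv n Γ Δ) :
    ∀ (ρ : ℕ → Srt → D S), (∀ x s, G 0 s (ρ x s) (ρ x s)) → ∀ p,
    (∀ A ∈ Γ, Force ρ cc A p) → (∀ B ∈ Δ, ng (Force ρ cc B) p) → Pv p := by
  induction h with
  | ax e =>
    intro ρ hρ p h1 h2
    have h1 := h1 _ (Multiset.mem_singleton_self _)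
    rw [force_conv e] at h1
    exact app h1 (h2 _ (Multiset.mem_singleton_self _))
  | cut e _ _ ih1 ih2 =>
    intro ρ hρ p h1 h2
    refine ih2 ρ hρ p h1 (Multiset.forall_mem_cons.2 ⟨?_, h2⟩)
    rw [← force_conv e]
    intro r hr
    refine ih1 ρ hρ _ (Multiset.forall_mem_cons.2 ⟨(stable _ _).mono hr _, fun A hA => ?_⟩) fun B hB => ?_
    · rw [add_comm]; exact (stable _ _).mono (h1 A hA) _
    · rw [add_comm]; exact ng_mono (h2 B hB) _
  | contrL e1 e2 _ ih =>
    intro ρ hρ p h1 h2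
    obtain ⟨hA, h1⟩ := Multiset.forall_mem_cons.1 h1
    refine ih ρ hρ p (Multiset.forall_mem_cons.2 ⟨?_, Multiset.forall_mem_cons.2 ⟨?_, h1⟩⟩) h2
    · rwa [← force_conv e1]
    · rwa [← force_conv e2]
  | contrR e1 e2 _ ih =>
    intro ρ hρ p h1 h2
    obtain ⟨hA, h2⟩ := Multiset.forall_mem_cons.1 h2
    refine ih ρ hρ p h1 (Multiset.forall_mem_cons.2 ⟨?_, Multiset.forall_mem_cons.2 ⟨?_, h2⟩⟩)
    · rwa [← force_conv e1]
    · rwa [← force_conv e2]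
  | weakL _ ih =>
    intro ρ hρ p h1 h2
    exact ih ρ hρ p (Multiset.forall_mem_cons.1 h1).2 h2
  | weakR _ ih =>
    intro ρ hρ p h1 h2
    exact ih ρ hρ p h1 (Multiset.forall_mem_cons.1 h2).2
  | @impL _ _ _ _ C A B e _ _ ih1 ih2 =>
    intro ρ hρ p h1 h2
    obtain ⟨hC, h1⟩ := Multiset.forall_mem_cons.1 h1
    rw [force_conv e] at hC
    have hA : Force ρ cc A p := by
      refine stable _ _ _ fun q hq => ?_
      refine ih1 ρ hρ _ (fun X hX => (stable _ _).mono (h1 X hX) _)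
        (Multiset.forall_mem_cons.2 ⟨?_, fun X hX => ng_mono (h2 X hX) _⟩)
      rw [add_comm]; exact ng_mono hq _
    refine contr0 (ih2 ρ hρ _ (Multiset.forall_mem_cons.2 ⟨hC p hA, ?_⟩) ?_)
    · exact fun X hX => (stable _ _).mono (h1 X hX) _
    · exact fun X hX => ng_mono (h2 X hX) _
  | @impR _ _ _ C A B e _ ih =>
    intro ρ hρ p h1 h2
    obtain ⟨hC, h2⟩ := Multiset.forall_mem_cons.1 h2
    rw [force_conv e] at hC
    refine app (fun q hq => stable _ _ _ fun r hr => ?_) hC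
    rw [add_assoc]
    refine ih ρ hρ _ (Multiset.forall_mem_cons.2 ⟨?_, ?_⟩) (Multiset.forall_mem_cons.2 ⟨?_, ?_⟩)
    · rw [show p + (q + r) = q + (p + r) by abel]; exact (stable _ _).mono hq _
    · exact fun X hX => (stable _ _).mono (h1 X hX) _
    · rw [show p + (q + r) = r + (p + q) by abel]; exact ng_mono hr _
    · exact fun X hX => ng_mono (h2 X hX) _
  | conjL e _ ih =>
    intro ρ hρ p h1 h2
    obtain ⟨hC, h1⟩ := Multiset.forall_mem_cons.1 h1
    rw [force_conv e] at hC
    exact ih ρ hρ p (Multiset.forall_mem_cons.2 ⟨hC.1, Multiset.forall_mem_cons.2 ⟨hC.2, h1⟩⟩) h2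
  | conjR e _ _ ih1 ih2 =>
    intro ρ hρ p h1 h2
    obtain ⟨hC, h2⟩ := Multiset.forall_mem_cons.1 h2
    rw [force_conv e] at hC
    refine app ⟨stable _ _ _ fun q hq => ?_, stable _ _ _ fun q hq => ?_⟩ hC
    · refine ih1 ρ hρ _ (fun X hX => (stable _ _).mono (h1 X hX) _)
        (Multiset.forall_mem_cons.2 ⟨?_, fun X hX => ng_mono (h2 X hX) _⟩)
      rw [add_comm]; exact ng_mono hq _
    · refine ih2 ρ hρ _ (fun X hX => (stable _ _).mono (h1 X hX) _)
        (Multiset.forall_mem_cons.2 ⟨?_, fun X hX => ng_mono (h2 X hX) _⟩)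
      rw [add_comm]; exact ng_mono hq _
  | disjL e _ _ ih1 ih2 =>
    intro ρ hρ p h1 h2
    obtain ⟨hC, h1⟩ := Multiset.forall_mem_cons.1 h1
    rw [force_conv e] at hC
    refine contr0 (hC p (fun r hr => ?_) (fun r hr => ?_))
    · refine ih1 ρ hρ _ (Multiset.forall_mem_cons.2 ⟨(stable _ _).mono hr _, fun A hA => ?_⟩) fun B hB => ?_
      · rw [add_comm]; exact (stable _ _).mono (h1 A hA) _
      · rw [add_comm]; exact ng_mono (h2 B hB) _
    · refine ih2 ρ hρ _ (Multiset.forall_mem_cons.2 ⟨(stable _ _).mono hr _, fun A hA => ?_⟩) fun B hB => ?_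
      · rw [add_comm]; exact (stable _ _).mono (h1 A hA) _
      · rw [add_comm]; exact ng_mono (h2 B hB) _
  | disjR e _ ih =>
    intro ρ hρ p h1 h2
    obtain ⟨hC, h2⟩ := Multiset.forall_mem_cons.1 h2
    rw [force_conv e] at hC
    refine app (fun q hA hB => ?_) hC
    refine ih ρ hρ _ (fun X hX => (stable _ _).mono (h1 X hX) _) (Multiset.forall_mem_cons.2
      ⟨?_, Multiset.forall_mem_cons.2 ⟨?_, fun X hX => ng_mono (h2 X hX) _⟩⟩)
    · rw [add_comm]; exact ng_mono hA _
    · rw [add_comm]; exact ng_mono hB _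
  | botL e =>
    intro ρ hρ p h1 h2
    obtain ⟨hC, h1⟩ := Multiset.forall_mem_cons.1 h1
    rw [force_conv e] at hC
    exact hC
  | allL e e' ht _ ih =>
    intro ρ hρ p h1 h2
    obtain ⟨hC, h1⟩ := Multiset.forall_mem_cons.1 h1
    rw [force_conv e] at hC
    refine ih ρ hρ p (Multiset.forall_mem_cons.2 ⟨?_, h1⟩) h2
    rw [force_conv e', force_inst ht]
    exact hC _ (G_den hρ (by simp) ht)
  | @allR _ _ _ B A s x e hx1 hx2 hx3 _ ih =>
    intro ρ hρ p h1 h2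
    obtain ⟨hC, h2⟩ := Multiset.forall_mem_cons.1 h2
    rw [force_conv e] at hC
    refine app (fun d hd => stable _ _ _ fun q hq => ?_) hC
    refine ih _ (G_update hρ x s d hd) _ (fun X hX => ?_)
      (Multiset.forall_mem_cons.2 ⟨?_, fun X hX => ?_⟩)
    · rw [force_fresh X fun hx => hx1 ⟨X, hX, hx⟩]
      exact (stable _ _).mono (h1 X hX) _
    · rw [force_eigen d A hx3, add_comm]; exact ng_mono hq _
    · rw [force_fresh X fun hx => hx2 ⟨X, hX, hx⟩]
      exact ng_mono (h2 X hX) _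
  | @exL _ _ _ B A s x e hx1 hx2 hx3 _ ih =>
    intro ρ hρ p h1 h2
    obtain ⟨hC, h1⟩ := Multiset.forall_mem_cons.1 h1
    rw [force_conv e] at hC
    refine contr0 (hC p fun d hd r hr => ?_)
    refine ih _ (G_update hρ x s d hd) _
      (Multiset.forall_mem_cons.2 ⟨?_, fun X hX => ?_⟩) (fun X hX => ?_)
    · rw [force_eigen d A hx3]; exact (stable _ _).mono hr _
    · rw [force_fresh X fun hx => hx1 ⟨X, hX, hx⟩, add_comm]
      exact (stable _ _).mono (h1 X hX) _
    · rw [force_fresh X fun hx => hx2 ⟨X, hX, hx⟩, add_comm]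
      exact ng_mono (h2 X hX) _
  | exR e e' ht _ ih =>
    intro ρ hρ p h1 h2
    obtain ⟨hC, h2⟩ := Multiset.forall_mem_cons.1 h2
    rw [force_conv e] at hC
    refine app (fun q hq => ?_) hC
    refine ih ρ hρ _ (fun X hX => (stable _ _).mono (h1 X hX) _)
      (Multiset.forall_mem_cons.2 ⟨?_, fun X hX => ng_mono (h2 X hX) _⟩)
    rw [force_conv e', force_inst ht, add_comm]
    exact ng_mono (hq _ (G_den hρ (by simp) ht)) _

/-- the set of conditions proving `A` -/
def Tr (A : FP S) (p : Cond S) : Prop := Pv (R A + p)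

theorem ng_Tr {A : FP S} {q : Cond S} : ng (Tr A) q ↔ Pv (L A + q) := by
  constructor
  · intro h
    refine h (L A) ?_
    have := ax A 0
    rw [Tr, add_comm]
    simpa using this
  · intro h r hr
    exact cutm h hr

/-- witnesses -/
theorem FTerm_rb {d : D S} (hd : G 0 (.tm 0) d d) : FTerm0 (rb 0 (d 0)) :=
  ⟨(NS_rb _ _).normal, (NS_rb _ _).vars0, rb_sort (m := 0) _ hd.2⟩

theorem inst_FProp {A : EFm S} {t : ETm S} (hv : A.vars0F) (hs : EFmSorted [.tm 0] A) (ht : FTerm0 t) :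
    FProp (nf (EFm.openF t 0 A)) ∧ FConv (nf (EFm.openF t 0 A)) (EFm.openF t 0 A) := by
  have h1 := openF_vars ht.2.1 A 0 hv
  have h2 : EFmSorted (List.replicate 0 (.tm 0)) (EFm.openF t 0 A) := openF_sort ht.2.2 A [] hs
  exact ⟨⟨nf_normal _, nf_vars _ h1, nf_sorted _ h2 h1⟩, fc_symm (nf_conv _ h2 h1)⟩

theorem eigen_FProp {A : EFm S} (x : ℕ) (hv : A.vars0F) (hs : EFmSorted [.tm 0] A) :
    FProp (EFm.openF (.evar x (.tm 0)) 0 (nf A)) :=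
  ⟨nf_open_normal x A 0, openF_vars (u := .evar x (.tm 0)) rfl _ 0 (nf_vars _ hv),
    openF_sort .evar _ [] (nf_sorted (m := 1) _ hs hv)⟩

theorem force_eigen0 {A : EFm S} (x : ℕ) (hv : A.vars0F) (hs : EFmSorted [.tm 0] A) :
    Force ρ0 cc (EFm.openF (.evar x (.tm 0)) 0 (nf A)) = Force ρ0 (push (ρ0 x (.tm 0)) cc) A := by
  rw [force_inst .evar, ← force_conv (nf_conv (m := 1) A hs hv)]
  rfl

theorem force_wit {A : EFm S} {d : D S} (hv : A.vars0F) (hs : EFmSorted [.tm 0] A)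
    (hd : G 0 (.tm 0) d d) :
    Force ρ0 cc (nf (EFm.openF (rb 0 (d 0)) 0 A)) = Force ρ0 (push d cc) A := by
  have ht := FTerm_rb hd
  rw [force_conv (inst_FProp hv hs ht).2, force_inst ht.2.2]
  refine force_rel (G_ρ0 0) A _ hs _ _ fun i s h => ?_
  cases i with
  | zero =>
    simp at h
    subst h
    have : den ρ0 cc (rb 0 (d 0)) 0 = d 0 := den_rb _ hd.2
    exact ⟨this, by simp only [push, this]; exact hd.2⟩
  | succ i => simp at h

theorem completeness (n : ℕ) : ∀ A : FP S, sz A.1 < n → Force ρ0 cc A.1 = Tr A := by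
  induction n with
  | zero => intro A h; omega
  | succ n ih =>
    rintro ⟨A, hA⟩ hn
    funext p
    apply propext
    cases A with
    | atom P a =>
      have e : ∀ i, den ρ0 cc (a i) = den ρ0 η0 (a i) := fun i => den_closed _ _ (hA.2.2 i) rfl
      have hs : EFmSorted (List.replicate 0 (.tm 0)) (EFm.atom P a) := hA.2.2
      have hF : FProp (nf (.atom P a)) := ⟨nf_normal _, nf_vars _ hA.2.1, nf_sorted _ hs hA.2.1⟩
      have hc : FConv (.atom P a) (nf (.atom P a)) := nf_conv _ hs hA.2.1
      have e2 : Force ρ0 cc (.atom P a) p = Pv (p + R (mk (nf (.atom P a)))) := by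
        simp only [Force, e, nf]
      simp only [e2, mk_eq hF, Tr]
      rw [add_comm]
      exact ⟨convR (fc_symm hc), convR hc⟩
    | imp A B =>
      have h1 := ih ⟨A, hA.1.1, hA.2.1.1, hA.2.2.1⟩ (by simp only [sz] at hn ⊢; omega)
      have h2 := ih ⟨B, hA.1.2, hA.2.1.2, hA.2.2.2⟩ (by simp only [sz] at hn ⊢; omega)
      generalize hA' : (⟨A, hA.1.1, hA.2.1.1, hA.2.2.1⟩ : FP S) = A' at h1
      generalize hB' : (⟨B, hA.1.2, hA.2.1.2, hA.2.2.2⟩ : FP S) = B' at h2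
      obtain rfl : A'.1 = A := by rw [← hA']
      obtain rfl : B'.1 = B := by rw [← hB']
      simp only [Force, h1, h2, Tr]
      constructor
      · intro h
        refine impR (A := A') (B := B') rfl ?_
        have := h (L A') (by have := ax A' 0; rw [add_comm]; simpa using this)
        convert this using 1
        abel
      · intro h q hq
        rw [show R B' + (p + q) = p + (R B' + q) by abel]
        refine cutm (impL (A := A') (B := B') rfl ?_ (ax _ _)) h
        rw [show R A' + (R B' + q) = R A' + q + R B' by abel]
        exact weak hq _
    | conj A B =>
      have h1 := ih ⟨A, hA.1.1, hA.2.1.1, hA.2.2.1⟩ (by simp only [sz] at hn ⊢; omega)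
      have h2 := ih ⟨B, hA.1.2, hA.2.1.2, hA.2.2.2⟩ (by simp only [sz] at hn ⊢; omega)
      generalize hA' : (⟨A, hA.1.1, hA.2.1.1, hA.2.2.1⟩ : FP S) = A' at h1
      generalize hB' : (⟨B, hA.1.2, hA.2.1.2, hA.2.2.2⟩ : FP S) = B' at h2
      obtain rfl : A'.1 = A := by rw [← hA']
      obtain rfl : B'.1 = B := by rw [← hB']
      simp only [Force, h1, h2, Tr]
      constructor
      · intro h
        exact conjR (A := A') (B := B') rfl h.1 h.2
      · intro h
        constructor
        · rw [add_comm]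
          refine cutm (conjL (A := A') (B := B') rfl ?_) h
          rw [show L A' + (L B' + R A') = L A' + (R A' + L B') by abel]
          exact ax _ _
        · rw [add_comm]
          refine cutm (conjL (A := A') (B := B') rfl ?_) h
          rw [show L A' + (L B' + R B') = L B' + (R B' + L A') by abel]
          exact ax _ _
    | disj A B =>
      have h1 := ih ⟨A, hA.1.1, hA.2.1.1, hA.2.2.1⟩ (by simp only [sz] at hn ⊢; omega)
      have h2 := ih ⟨B, hA.1.2, hA.2.1.2, hA.2.2.2⟩ (by simp only [sz] at hn ⊢; omega)
      generalize hA' : (⟨A, hA.1.1, hA.2.1.1, hA.2.2.1⟩ : FP S) = A' at h1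
      generalize hB' : (⟨B, hA.1.2, hA.2.1.2, hA.2.2.2⟩ : FP S) = B' at h2
      obtain rfl : A'.1 = A := by rw [← hA']
      obtain rfl : B'.1 = B := by rw [← hB']
      simp only [Force, h1, h2, ng_Tr]
      constructor
      · intro h
        rw [Tr, add_comm]
        refine h _ ?_ ?_
        · rw [add_comm]
          refine disjR (A := A') (B := B') rfl ?_
          rw [show R A' + (R B' + L A') = L A' + (R A' + R B') by abel]
          exact ax _ _
        · rw [add_comm]
          refine disjR (A := A') (B := B') rfl ?_
          rw [show R A' + (R B' + L B') = L B' + (R B' + R A') by abel]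
          exact ax _ _
      · intro h q h1 h2
        exact cutm (disjL (A := A') (B := B') rfl h1 h2) h
    | bot =>
      simp only [Force, Tr]
      constructor
      · intro h
        rw [add_comm]; exact weak h _
      · intro h
        have := cutm (q := 0) (botL rfl) h
        simpa using this
    | all s A =>
      obtain ⟨hN, ⟨rfl, hv⟩, hs⟩ := hA
      replace hs : EFmSorted [.tm 0] A := hs
      simp only [Force]
      constructor
      · intro h
        obtain ⟨x, hx1, hx2, hx3⟩ := exists_fresh (lf p) (rt p) (nf A)
        have := h (ρ0 x (.tm 0)) (G_ρ0 _ _ _)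
        rw [← force_eigen0 x hv hs] at this
        have e := ih ⟨_, eigen_FProp x hv hs⟩ (by
          simp only [sz_open, sz_nf]; simp only [sz] at hn; omega)
        rw [e] at this
        exact allR (A := nf A) (.all (nf_conv (m := 1) A hs hv)) rfl hx1 hx2 hx3 this
      · intro h d hd
        have ht := FTerm_rb hd
        have e := ih ⟨_, (inst_FProp hv hs ht).1⟩ (by
          simp only [sz_open, sz_nf]; simp only [sz] at hn; omega)
        rw [← force_wit hv hs hd, e, Tr, add_comm]
        refine cutm (allL (A := A) (C := ⟨_, (inst_FProp hv hs ht).1⟩) rfl ht (inst_FProp hv hs ht).2 ?_) h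
        exact axm (fc_refl _)
    | ex s A =>
      obtain ⟨hN, ⟨rfl, hv⟩, hs⟩ := hA
      replace hs : EFmSorted [.tm 0] A := hs
      simp only [Force]
      constructor
      · intro h
        rw [Tr, add_comm]
        refine h _ fun d hd r hr => ?_
        have ht := FTerm_rb hd
        have e := ih ⟨_, (inst_FProp hv hs ht).1⟩ (by
          simp only [sz_open, sz_nf]; simp only [sz] at hn; omega)
        rw [← force_wit hv hs hd, e] at hr
        rw [add_comm]
        exact exR (A := A) rfl ht (inst_FProp hv hs ht).2 hr
      · intro h q hq
        obtain ⟨x, hx1, hx2, hx3⟩ := exists_fresh (lf q) (rt q) (nf A)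
        have := hq (ρ0 x (.tm 0)) (G_ρ0 _ _ _)
        rw [← force_eigen0 x hv hs] at this
        have e := ih ⟨_, eigen_FProp x hv hs⟩ (by
          simp only [sz_open, sz_nf]; simp only [sz] at hn; omega)
        rw [e, ng_Tr] at this
        exact cutm (exL (A := nf A) (.ex (nf_conv (m := 1) A hs hv)) rfl hx1 hx2 hx3 this) h

theorem main {n : ℕ} (p : Cond S) (h : DerivM FConv n (lf p) (rt p)) : Pv p := by
  refine soundness h ρ0 (G_ρ0 0) p (fun A hA => ?_) (fun B hB => ?_)
  · obtain ⟨A, hA2, rfl⟩ := Multiset.mem_map.1 hA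
    rw [completeness _ A (Nat.lt_succ_self _), Tr]
    obtain ⟨Γ, hΓ⟩ := Multiset.exists_cons_of_mem hA2
    have : p = L A + (Γ, p.2) := by
      ext1
      · simp [L, hΓ]
      · simp [L]
    rw [this, show R A + (L A + (Γ, p.2)) = L A + (R A + (Γ, p.2)) by abel]
    exact ax _ _
  · obtain ⟨B, hB2, rfl⟩ := Multiset.mem_map.1 hB
    rw [completeness _ B (Nat.lt_succ_self _), ng_Tr]
    obtain ⟨Γ, hΓ⟩ := Multiset.exists_cons_of_mem hB2
    have : p = R B + (p.1, Γ) := by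
      ext1
      · simp [R]
      · simp [R, hΓ]
    rw [this]
    exact ax _ _

theorem final (Γ Δ : Multiset (EFm S)) (hΓ : ∀ A ∈ Γ, FProp A) (hΔ : ∀ B ∈ Δ, FProp B)
    (h : DerivMod FConv Γ Δ) : DerivR FConv FProp FTerm0 Γ Δ := by
  obtain ⟨n, h⟩ := h
  lift Γ to Multiset (FP S) using hΓ
  lift Δ to Multiset (FP S) using hΔ
  exact main (Γ, Δ) h

end KeyF

/-- **Proposition (key).**  Let `Γ ⊢ Δ` be a sequent of `L'` containing only
F-propositions.  If it has a proof in sequent calculus modulo the congruence generated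
by `σ`, then it has a proof in which all propositions occurring are F-propositions and
all quantifier witnesses are F-terms of sort `0`. -/
theorem key_F_proof (S : BSig) (Γ Δ : Multiset (EFm S))
    (hΓ : ∀ A ∈ Γ, FProp A) (hΔ : ∀ B ∈ Δ, FProp B)
    (h : DerivMod FConv Γ Δ) :
    DerivR FConv FProp FTerm0 Γ Δ := by
  exact KeyF.final Γ Δ hΓ hΔ h
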